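/- Let 1<p≤q<∞, let ω be a radial weight on [0,1) with ω∈𝒟 and ω̂(r)>0 for all r∈[0,1), extended to 𝔹 by ω(z)=ω(|z|), and let B^ω be the reproducing kernel of A²_ω. For a measurable function f:𝔹→ℂ define 𝒯f(z) = ∫_𝔹 |f(u)|·|B^ω_z(u)|·(1−|u|)^{(1/p−1/q)(n+1)}·ω(u)^{1+1/p−1/q} dV(u). Then there exists a constant C>0, independent of f, such that ∫_𝔹 (𝒯f(z))^q ω(z) dV(z) ≤ C·∫_𝔹 |f(u)|^q (1−|u|)^{(q/p−1)(n+1)} ω(u)^{q/p} dV(u) for every measurable f:𝔹→ℂ. -/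

import Mathlib

/-!
Put `g(u) = |f(u)| (1-|u|)^{(1/p-1/q)(n+1)} ω(u)^{1/p-1/q}`. Then `𝒯f(z) = ∫ |B_z(u)| g(u) ω dV` and
the right-hand side is `∫ g^q ω dV`, so the claim is that the positive operator with kernel
`|B_z(u)|` is bounded on `L^q_ω`.

*The kernel.* Since `ω dV` is invariant under unitary maps, averaging over rotations shows that
`B_z(u) = F(⟨z,u⟩)` in modulus (`norm_kernel`), where `F(w) = ∑ w^k / M_k` and
`M_k = ∫ |⟨e,u⟩|^{2k} ω dV` for a unit vector `e`.

*Size of `F`.* The sequence `M_k` is completely monotone, and doubling because `ω ∈ 𝒟̂`; hence `1/M_k`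
behaves like a symbol: its `j`-th difference is `O((k+1)^{-j} / M_k)` (`sym_inv`). Repeated summation
by parts gives `|F(w)| ≲ 2^{in} / ω̂(1-2^{-i})` for `|1-w| ≥ 2^{-i}` (`kernel_bound`, `kerF_bound`).

*Integral estimate.* At scale `2^{-i}`, `|F(⟨z,u⟩)|` is dominated by a multiple of the Poisson-type
kernel `|1-(1-2^{-i})⟨z,u⟩|^{-2n}`, with `1-|z|` and `1-|u|` both at most `2·2^{-i}`
(`kerF_domination`). The integral of that kernel against a radial measure is explicit
(`poisson_integral`). The class `𝒟̌` makes `ω̂(1-2^{-i})` decay geometrically (`reverse_doubling`), and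
summing over the scales gives `∫ |B_z| ω̂^{-ε} ω dV ≲ ω̂(z)^{-ε}` for `0 < ε < 1` (`kerF_schur`).

*Conclusion.* Schur's test (`schur_test`) applies with the test function `ω̂^{-1/(qq')}`, where
`1/q + 1/q' = 1`.
-/

open MeasureTheory Metric Filter

noncomputable section

/-- A weight on `[0,1)`: a non-negative, measurable, integrable function. -/
def IsWeight (ω : ℝ → ℝ) : Prop :=
  (∀ r ∈ Set.Ico (0:ℝ) 1, 0 ≤ ω r) ∧ Measurable ω ∧ IntegrableOn ω (Set.Ico 0 1)

/-- `ω̂(r) = ∫_r^1 ω(t) dt`. -/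
def wh (ω : ℝ → ℝ) (r : ℝ) : ℝ := ∫ t in Set.Ioo r 1, ω t

/-- The class `Dhat` of upper doubling weights. -/
def DHat (ω : ℝ → ℝ) : Prop :=
  ∃ C : ℝ, 1 ≤ C ∧ ∀ r ∈ Set.Ico (0:ℝ) 1, wh ω r ≤ C * wh ω ((1 + r) / 2)

/-- The class `Dcheck`: there exist `C, K > 1` with `ω̂(r) ≥ C·ω̂(1-(1-r)/K)`. -/
def DCheck (ω : ℝ → ℝ) : Prop :=
  ∃ C K : ℝ, 1 < C ∧ 1 < K ∧ ∀ r ∈ Set.Ico (0:ℝ) 1,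
    C * wh ω (1 - (1 - r) / K) ≤ wh ω r

/-- `D = Dhat ∩ Dcheck`. -/
def DD (ω : ℝ → ℝ) : Prop := DHat ω ∧ DCheck ω

/-- `ℂⁿ`. -/
abbrev En (n : ℕ) := EuclideanSpace ℂ (Fin n)

instance (n : ℕ) : MeasurableSpace (En n) := borel _
instance (n : ℕ) : BorelSpace (En n) := ⟨rfl⟩

/-- The normalized volume measure on `ℂⁿ`, giving the unit ball measure `1`. -/
def nV (n : ℕ) : Measure (En n) := (volume (ball (0 : En n) 1))⁻¹ • volume

/-- The open unit ball `the unit ball` of `ℂⁿ`. -/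
def Bl (n : ℕ) : Set (En n) := ball 0 1

/-- Membership in the Bergman space `A^p_ω`: holomorphic on `the unit ball` with finite norm. -/
def InAp (n : ℕ) (p : ℝ) (ω : ℝ → ℝ) (f : En n → ℂ) : Prop :=
  DifferentiableOn ℂ f (Bl n) ∧
    IntegrableOn (fun z => ‖f z‖ ^ p * ω ‖z‖) (Bl n) (nV n)

/-- The norm of `A^p_ω`. -/
def ApNorm (n : ℕ) (p : ℝ) (ω : ℝ → ℝ) (f : En n → ℂ) : ℝ :=
  (∫ z in Bl n, ‖f z‖ ^ p * ω ‖z‖ ∂(nV n)) ^ (1 / p)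

/-- `B` is the reproducing kernel of `A²_ω`: each `B z` lies in `A²_ω` and
`f(z) = ⟨f, B z⟩_{A²_ω}` for all `f ∈ A²_ω` and `z ∈ the unit ball`. -/
def IsRepKernel (n : ℕ) (ω : ℝ → ℝ) (B : En n → En n → ℂ) : Prop :=
  (∀ z ∈ Bl n, InAp n 2 ω (B z)) ∧
    ∀ f : En n → ℂ, InAp n 2 ω f → ∀ z ∈ Bl n,
      f z = ∫ ξ in Bl n, f ξ * (starRingEnd ℂ) (B z ξ) * (ω ‖ξ‖ : ℂ) ∂(nV n)

/-! ### Symbol estimates for reciprocals of completely monotone sequences -/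

/-- Forward difference of a real sequence. -/
def dl (f : ℕ → ℝ) : ℕ → ℝ := fun k => f (k + 1) - f k

/-- `DSym N f φ`: the sequence `f` is a discrete symbol of size `φ` up to order `N`, that is
`|Δ^j f k| ≤ C φ k / (k + 1) ^ j` for all `j ≤ N`. -/
def DSym : ℕ → (ℕ → ℝ) → (ℕ → ℝ) → Prop
  | 0, f, φ => ∃ C : ℝ, 0 ≤ C ∧ ∀ k, |f k| ≤ C * φ k
  | N + 1, f, φ => (∃ C : ℝ, 0 ≤ C ∧ ∀ k, |f k| ≤ C * φ k) ∧
      DSym N (dl f) (fun k => φ k / ((k : ℝ) + 1))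

lemma DSym.bound {N : ℕ} {f φ : ℕ → ℝ} (h : DSym N f φ) :
    ∃ C : ℝ, 0 ≤ C ∧ ∀ k, |f k| ≤ C * φ k := by
  cases N with
  | zero => exact h
  | succ N => exact h.1

lemma DSym.mono {N : ℕ} {f φ ψ : ℕ → ℝ} (h : DSym N f φ) {A : ℝ} (hA : 0 ≤ A)
    (hle : ∀ k, φ k ≤ A * ψ k) : DSym N f ψ := by
  have key : ∀ {f φ ψ : ℕ → ℝ}, (∃ C : ℝ, 0 ≤ C ∧ ∀ k, |f k| ≤ C * φ k) →
      (∀ k, φ k ≤ A * ψ k) → ∃ C : ℝ, 0 ≤ C ∧ ∀ k, |f k| ≤ C * ψ k := by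
    rintro f φ ψ ⟨C, hC, hf⟩ hle
    refine ⟨C * A, by positivity, fun k => (hf k).trans ?_⟩
    rw [mul_assoc]
    exact mul_le_mul_of_nonneg_left (hle k) hC
  induction N generalizing f φ ψ with
  | zero => exact key h hle
  | succ N ih =>
    refine ⟨key h.1 hle, ih h.2 fun k => ?_⟩
    rw [← mul_div_assoc]
    have := hle k
    gcongr

lemma DSym.add {N : ℕ} {f g φ : ℕ → ℝ} (hf : DSym N f φ) (hg : DSym N g φ) :
    DSym N (fun k => f k + g k) φ := by
  have key : ∀ {f g φ : ℕ → ℝ}, (∃ C : ℝ, 0 ≤ C ∧ ∀ k, |f k| ≤ C * φ k) →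
      (∃ C : ℝ, 0 ≤ C ∧ ∀ k, |g k| ≤ C * φ k) →
      ∃ C : ℝ, 0 ≤ C ∧ ∀ k, |f k + g k| ≤ C * φ k := by
    rintro f g φ ⟨C, hC, hf⟩ ⟨D, hD, hg⟩
    refine ⟨C + D, by positivity, fun k => (abs_add_le _ _).trans ?_⟩
    rw [add_mul]
    exact add_le_add (hf k) (hg k)
  induction N generalizing f g φ with
  | zero => exact key hf hg
  | succ N ih =>
    refine ⟨key hf.1 hg.1, ?_⟩
    have := ih hf.2 hg.2
    convert this using 1
    ext k; simp only [dl]; ring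

lemma DSym.pred {N : ℕ} {f φ : ℕ → ℝ} (h : DSym (N + 1) f φ) : DSym N f φ := by
  induction N generalizing f φ with
  | zero => exact h.1
  | succ N ih => exact ⟨h.1, ih h.2⟩

lemma DSym.neg {N : ℕ} {f φ : ℕ → ℝ} (h : DSym N f φ) : DSym N (fun k => -f k) φ := by
  induction N generalizing f φ with
  | zero => simpa [DSym] using h
  | succ N ih =>
    refine ⟨by simpa using h.1, ?_⟩
    convert ih h.2 using 1
    ext k; simp only [dl]; ring

lemma DSym.shift {N : ℕ} {f φ : ℕ → ℝ} (hφ : ∀ k, 0 ≤ φ k) (h : DSym N f φ) :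
    DSym N (fun k => f (k + 1)) (fun k => φ (k + 1)) := by
  induction N generalizing f φ with
  | zero => obtain ⟨C, hC, h⟩ := h; exact ⟨C, hC, fun k => h _⟩
  | succ N ih =>
    refine ⟨?_, ?_⟩
    · obtain ⟨C, hC, h⟩ := h.1; exact ⟨C, hC, fun k => h _⟩
    · refine (ih (fun k => div_nonneg (hφ k) (by positivity)) h.2).mono zero_le_one fun k => ?_
      rw [one_mul]
      have := hφ (k + 1)
      gcongr
      simp

/-- Products of symbols are symbols; the Leibniz rule is used in the shift-free form
`Δ(fg) = Δf·g + f·Δg + Δf·Δg`. -/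
lemma DSym.mul {N : ℕ} {f g φ ψ : ℕ → ℝ} (hφ : ∀ k, 0 ≤ φ k) (hψ : ∀ k, 0 ≤ ψ k)
    (hf : DSym N f φ) (hg : DSym N g ψ) :
    DSym N (fun k => f k * g k) (fun k => φ k * ψ k) := by
  have key : ∀ {f g φ ψ : ℕ → ℝ}, (∀ k, 0 ≤ φ k) →
      (∃ C : ℝ, 0 ≤ C ∧ ∀ k, |f k| ≤ C * φ k) →
      (∃ C : ℝ, 0 ≤ C ∧ ∀ k, |g k| ≤ C * ψ k) →
      ∃ C : ℝ, 0 ≤ C ∧ ∀ k, |f k * g k| ≤ C * (φ k * ψ k) := by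
    rintro f g φ ψ hφ ⟨C, hC, hf⟩ ⟨D, hD, hg⟩
    refine ⟨C * D, by positivity, fun k => ?_⟩
    rw [abs_mul, mul_mul_mul_comm]
    exact mul_le_mul (hf k) (hg k) (abs_nonneg _) (mul_nonneg hC (hφ k))
  induction N generalizing f g φ ψ with
  | zero => exact key hφ hf hg
  | succ N ih =>
    refine ⟨key hφ hf.1 hg.1, ?_⟩
    have hφ' : ∀ k : ℕ, 0 ≤ φ k / ((k : ℝ) + 1) := fun k => div_nonneg (hφ k) (by positivity)
    have hψ' : ∀ k : ℕ, 0 ≤ ψ k / ((k : ℝ) + 1) := fun k => div_nonneg (hψ k) (by positivity)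
    have h1 := ih hφ' hψ hf.2 hg.pred
    have h2 := ih hφ hψ' hf.pred hg.2
    have h3 := ih hφ' hψ' hf.2 hg.2
    have h1' := h1.mono (ψ := fun k => φ k * ψ k / ((k : ℝ) + 1)) zero_le_one
      (fun k => by rw [one_mul, div_mul_eq_mul_div])
    have h2' := h2.mono (ψ := fun k => φ k * ψ k / ((k : ℝ) + 1)) zero_le_one
      (fun k => by rw [one_mul, mul_div_assoc])
    have h3' := h3.mono (ψ := fun k => φ k * ψ k / ((k : ℝ) + 1)) zero_le_one
      (fun k => by
        rw [one_mul, div_mul_eq_mul_div]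
        have := hφ k; have := hψ k
        gcongr
        exact div_le_self (hψ k) (by simp))
    convert (h1'.add h2').add h3' using 1
    ext k; simp only [dl]; ring

/-- `cmd m j = (-1)^j Δ^j m`. -/
def cmd (m : ℕ → ℝ) : ℕ → ℕ → ℝ
  | 0 => m
  | j + 1 => fun k => cmd m j k - cmd m j (k + 1)

lemma cmd_anti {m : ℕ → ℝ} (hcm : ∀ j k, 0 ≤ cmd m j k) (j : ℕ) : Antitone (cmd m j) :=
  antitone_nat_of_succ_le fun k => by have := hcm (j + 1) k; simp only [cmd] at this; linarith

lemma cmd_step {m : ℕ → ℝ} (hcm : ∀ j k, 0 ≤ cmd m j k) (j k : ℕ) : ((k : ℝ) + 1) * cmd m (j + 1) (2 * k) ≤ cmd m j k := by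
  have h1 : ∑ i ∈ Finset.range (k + 1), cmd m (j + 1) (k + i)
      = cmd m j k - cmd m j (k + (k + 1)) := by
    have := Finset.sum_range_sub' (fun i => cmd m j (k + i)) (k + 1)
    simpa [cmd, add_assoc] using this
  have h2 : ∑ i ∈ Finset.range (k + 1), cmd m (j + 1) (2 * k)
      ≤ ∑ i ∈ Finset.range (k + 1), cmd m (j + 1) (k + i) :=
    Finset.sum_le_sum fun i hi => cmd_anti hcm _ (by have := Finset.mem_range.1 hi; omega)
  rw [h1] at h2
  simp only [Finset.sum_const, Finset.card_range, nsmul_eq_mul, Nat.cast_add, Nat.cast_one] at h2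
  linarith [hcm j (k + (k + 1))]

lemma cmd_iter {m : ℕ → ℝ} (hcm : ∀ j k, 0 ≤ cmd m j k) (j k : ℕ) : ((k : ℝ) + 1) ^ j * cmd m j (2 ^ j * k) ≤ m k := by
  induction j with
  | zero => simp [cmd]
  | succ j ih =>
    have h := cmd_step hcm j (2 ^ j * k)
    have h2 : ((k : ℝ) + 1) * cmd m (j + 1) (2 ^ (j + 1) * k) ≤ cmd m j (2 ^ j * k) := by
      refine le_trans ?_ h
      rw [show 2 ^ (j + 1) * k = 2 * (2 ^ j * k) by ring]
      refine mul_le_mul_of_nonneg_right ?_ (hcm _ _)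
      have : (1 : ℝ) ≤ 2 ^ j := one_le_pow₀ (by norm_num)
      push_cast
      nlinarith [(Nat.cast_nonneg k : (0 : ℝ) ≤ k)]
    calc ((k : ℝ) + 1) ^ (j + 1) * cmd m (j + 1) (2 ^ (j + 1) * k)
        = ((k : ℝ) + 1) ^ j * (((k : ℝ) + 1) * cmd m (j + 1) (2 ^ (j + 1) * k)) := by ring
      _ ≤ _ := (mul_le_mul_of_nonneg_left h2 (by positivity)).trans ih

lemma doub_iter {m : ℕ → ℝ} {D : ℝ} (hD0 : 0 ≤ D)
    (hD : ∀ k, m k ≤ D * m (2 * k + 1)) (j k : ℕ) : m k ≤ D ^ j * m (2 ^ j * (k + 1) - 1) := by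
  induction j with
  | zero => simp
  | succ j ih =>
    refine ih.trans ?_
    have := hD (2 ^ j * (k + 1) - 1)
    have e : 2 * (2 ^ j * (k + 1) - 1) + 1 = 2 ^ (j + 1) * (k + 1) - 1 := by
      have : 1 ≤ 2 ^ j * (k + 1) := Nat.one_le_iff_ne_zero.2 (by positivity)
      rw [pow_succ]
      have e2 : 2 ^ j * 2 * (k + 1) = 2 * (2 ^ j * (k + 1)) := by ring
      omega
    rw [e] at this
    calc _ ≤ D ^ j * (D * m (2 ^ (j + 1) * (k + 1) - 1)) := by gcongr
      _ = _ := by ring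

lemma cmd_bound {m : ℕ → ℝ} (hcm : ∀ j k, 0 ≤ cmd m j k) {D : ℝ} (hD0 : 0 ≤ D)
    (hD : ∀ k, m k ≤ D * m (2 * k + 1)) (j : ℕ) : ∃ C : ℝ, 0 ≤ C ∧ ∀ k, cmd m j k ≤ C * (m k / ((k : ℝ) + 1) ^ j) := by
  refine ⟨(2 ^ j) ^ j * D ^ j, by positivity, fun k' => ?_⟩
  set k := k' / 2 ^ j with hk
  have hpos : 0 < 2 ^ j := by positivity
  have h1 : 2 ^ j * k ≤ k' := Nat.mul_div_le _ _
  have h2 : k' < 2 ^ j * (k + 1) := by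
    have := Nat.lt_mul_div_succ k' hpos
    simpa using this
  have h3 := cmd_iter hcm j k
  have h4 := cmd_anti hcm j h1
  have h5 := doub_iter hD0 hD j k
  have h6 : m (2 ^ j * (k + 1) - 1) ≤ m k' := cmd_anti hcm 0 (by omega)
  have h7 : ((k' : ℝ) + 1) ≤ 2 ^ j * ((k : ℝ) + 1) := by exact_mod_cast h2
  have hk'pos : (0 : ℝ) < ((k' : ℝ) + 1) ^ j := by positivity
  rw [← mul_div_assoc, le_div_iff₀ hk'pos]
  calc cmd m j k' * ((k' : ℝ) + 1) ^ j ≤ cmd m j (2 ^ j * k) * (2 ^ j * ((k : ℝ) + 1)) ^ j := by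
        have := hcm j (2 ^ j * k)
        gcongr
    _ = (2 ^ j) ^ j * (((k : ℝ) + 1) ^ j * cmd m j (2 ^ j * k)) := by rw [mul_pow]; ring
    _ ≤ (2 ^ j) ^ j * (D ^ j * m k') :=
        mul_le_mul_of_nonneg_left
          (h3.trans (h5.trans (mul_le_mul_of_nonneg_left h6 (by positivity)))) (by positivity)
    _ = _ := by ring

lemma sym_cmd {m : ℕ → ℝ} (hcm : ∀ j k, 0 ≤ cmd m j k) {D : ℝ} (hD0 : 0 ≤ D)
    (hD : ∀ k, m k ≤ D * m (2 * k + 1)) (N j : ℕ) : DSym N (cmd m j) (fun k => m k / ((k : ℝ) + 1) ^ j) := by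
  have key : ∀ j, ∃ C : ℝ, 0 ≤ C ∧ ∀ k, |cmd m j k| ≤ C * (m k / ((k : ℝ) + 1) ^ j) := by
    intro j
    obtain ⟨C, hC, h⟩ := cmd_bound hcm hD0 hD j
    exact ⟨C, hC, fun k => by rw [abs_of_nonneg (hcm j k)]; exact h k⟩
  induction N generalizing j with
  | zero => exact key j
  | succ N ih =>
    refine ⟨key j, ?_⟩
    convert (ih (j + 1)).neg using 1
    · ext k; simp [dl, cmd]
    · ext k; rw [pow_succ, div_div]

/-- The reciprocal of a doubling completely monotone sequence is a symbol of its own size. -/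
lemma sym_inv {m : ℕ → ℝ} (hcm : ∀ j k, 0 ≤ cmd m j k) {D : ℝ} (hD0 : 0 ≤ D)
    (hD : ∀ k, m k ≤ D * m (2 * k + 1))
    (hm : ∀ k, 0 < m k) (N : ℕ) : DSym N (fun k => (m k)⁻¹) (fun k => (m k)⁻¹) := by
  have hb : ∃ C : ℝ, 0 ≤ C ∧ ∀ k, |(m k)⁻¹| ≤ C * (m k)⁻¹ :=
    ⟨1, zero_le_one, fun k => by rw [abs_of_pos (inv_pos.2 (hm k)), one_mul]⟩
  have hnn : ∀ k, 0 ≤ (m k)⁻¹ := fun k => (inv_pos.2 (hm k)).le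
  induction N with
  | zero => exact hb
  | succ N ih =>
    refine ⟨hb, ?_⟩
    have hs : DSym N (fun k => (m (k + 1))⁻¹) (fun k => (m k)⁻¹) := by
      refine (ih.shift hnn).mono hD0 fun k => ?_
      have h1 : m k ≤ D * m (k + 1) := (hD k).trans (by
        have : m (2 * k + 1) ≤ m (k + 1) := cmd_anti hcm 0 (by omega)
        gcongr)
      rw [← div_eq_mul_inv, le_div_iff₀ (hm k), inv_mul_le_iff₀ (hm _)]
      linarith
    have h1 := sym_cmd hcm hD0 hD N 1
    have h2 := (h1.mul (fun k => div_nonneg (hm k).le (by positivity)) hnn ih).mul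
      (fun k => mul_nonneg (div_nonneg (hm k).le (by positivity)) (hnn k)) hnn hs
    convert h2 using 1
    · ext k
      have := (hm k).ne'
      have := (hm (k + 1)).ne'
      simp only [dl, cmd]; field_simp
    · ext k
      have := (hm k).ne'
      field_simp

lemma growth {m : ℕ → ℝ} (hcm : ∀ j k, 0 ≤ cmd m j k) {D : ℝ} (hD0 : 0 ≤ D)
    (hD : ∀ k, m k ≤ D * m (2 * k + 1))
    (hm : ∀ k, 0 < m k) : ∃ (β : ℕ) (A : ℝ), 0 < A ∧ ∀ L k, L ≤ k →
    (m k)⁻¹ * ((L : ℝ) + 1) ^ β ≤ A * ((k : ℝ) + 1) ^ β * (m L)⁻¹ := by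
  obtain ⟨β, hβ⟩ : ∃ β : ℕ, D * (3 / 4 : ℝ) ^ β ≤ 1 := by
    obtain ⟨β, hβ⟩ := exists_pow_lt_of_lt_one (show (0 : ℝ) < 1 / (D + 1) by positivity)
      (show (3 / 4 : ℝ) < 1 by norm_num)
    refine ⟨β, ?_⟩
    have h := mul_le_mul_of_nonneg_left hβ.le hD0
    refine h.trans ?_
    rw [mul_one_div, div_le_one (by positivity)]; linarith
  have hDpos : 0 < D := by
    by_contra hneg
    have h0 := hD 0
    have := hm 0
    have := hm (2 * 0 + 1)
    nlinarith
  have ha : ∀ k, (m (2 * k + 1))⁻¹ ≤ D * (m k)⁻¹ := fun k => by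
    rw [← div_eq_mul_inv, le_div_iff₀ (hm k), inv_mul_le_iff₀ (hm _)]
    linarith [hD k]
  have hmono : ∀ i j, i ≤ j → (m i)⁻¹ ≤ (m j)⁻¹ := fun i j hij =>
    inv_anti₀ (hm j) (cmd_anti hcm 0 hij)
  refine ⟨β, D, hDpos, fun L k => ?_⟩
  induction k using Nat.strong_induction_on with
  | _ k ih =>
    intro hLk
    have hnL := (inv_pos.2 (hm L))
    by_cases hk : k ≤ 2 * L + 1
    · have h1 := (hmono _ _ hk).trans (ha L)
      calc (m k)⁻¹ * ((L : ℝ) + 1) ^ β ≤ (D * (m L)⁻¹) * ((k : ℝ) + 1) ^ β := by gcongr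
        _ = _ := by ring
    · have h1 := ih (k / 2) (by omega) (by omega)
      have h2 : (m k)⁻¹ ≤ D * (m (k / 2))⁻¹ := (hmono _ _ (by omega)).trans (ha (k / 2))
      have h3 : ((k / 2 : ℕ) : ℝ) + 1 ≤ 3 / 4 * ((k : ℝ) + 1) := by
        have : 4 * (k / 2 + 1) ≤ 3 * (k + 1) := by omega
        have : (4 : ℝ) * (((k / 2 : ℕ) : ℝ) + 1) ≤ 3 * ((k : ℝ) + 1) := by exact_mod_cast this
        linarith
      calc (m k)⁻¹ * ((L : ℝ) + 1) ^ β ≤ D * ((m (k / 2))⁻¹ * ((L : ℝ) + 1) ^ β) := by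
            rw [← mul_assoc]; gcongr
        _ ≤ D * (D * (((k / 2 : ℕ) : ℝ) + 1) ^ β * (m L)⁻¹) := by gcongr
        _ ≤ D * (D * (3 / 4 * ((k : ℝ) + 1)) ^ β * (m L)⁻¹) := by gcongr
        _ = (D * (3 / 4) ^ β) * (D * ((k : ℝ) + 1) ^ β * (m L)⁻¹) := by rw [mul_pow]; ring
        _ ≤ 1 * (D * ((k : ℝ) + 1) ^ β * (m L)⁻¹) := by gcongr
        _ = _ := one_mul _

/-! ### Power series whose coefficients are symbols -/

lemma summable_poly {w : ℂ} (hw : ‖w‖ < 1) {f : ℕ → ℝ} {A : ℝ} {β : ℕ}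
    (hf : ∀ k, |f k| ≤ A * ((k : ℝ) + 1) ^ β) :
    Summable fun k => ((f k : ℝ) : ℂ) * w ^ k := by
  have h1 : Summable fun k : ℕ => ((k : ℝ) + 1) ^ β * ‖w‖ ^ k := by
    rcases eq_or_ne w 0 with rfl | hw0
    · refine summable_of_ne_finset_zero (s := {0}) fun k hk => ?_
      have : k ≠ 0 := by simpa using hk
      simp [this]
    · have h := summable_pow_mul_geometric_of_norm_lt_one (R := ℝ) β (r := ‖w‖) (by simpa using hw)
      have h2 := ((summable_nat_add_iff 1).2 h).mul_left (‖w‖⁻¹)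
      refine h2.congr fun k => ?_
      have : ‖w‖ ≠ 0 := by simpa using hw0
      push_cast
      rw [pow_succ ‖w‖]
      field_simp
  refine Summable.of_norm_bounded (h1.mul_left A) fun k => ?_
  rw [norm_mul, norm_pow, Complex.norm_real, Real.norm_eq_abs, ← mul_assoc]
  exact mul_le_mul_of_nonneg_right (hf k) (by positivity)

lemma sum_inv_sq_le (L : ℕ) (hL : 1 ≤ L) :
    Summable (fun k : ℕ => 1 / ((L : ℝ) + k + 1) ^ 2) ∧
      ∑' k : ℕ, 1 / ((L : ℝ) + k + 1) ^ 2 ≤ 1 / (L : ℝ) := by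
  have hL' : (1 : ℝ) ≤ L := by exact_mod_cast hL
  have hb : ∀ K : ℕ, ∑ k ∈ Finset.range K, 1 / ((L : ℝ) + k + 1) ^ 2 ≤ 1 / (L : ℝ) := by
    intro K
    have : ∑ k ∈ Finset.range K, 1 / ((L : ℝ) + k + 1) ^ 2 ≤ 1 / (L : ℝ) - 1 / ((L : ℝ) + K) := by
      induction K with
      | zero => simp
      | succ K ih =>
        rw [Finset.sum_range_succ]
        have hK : (0 : ℝ) ≤ K := K.cast_nonneg
        have h1 : 1 / ((L : ℝ) + K + 1) ^ 2 ≤ 1 / ((L : ℝ) + K) - 1 / ((L : ℝ) + K + 1) := by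
          rw [div_sub_div _ _ (by positivity) (by positivity),
            div_le_div_iff₀ (by positivity) (by positivity)]
          nlinarith
        push_cast
        rw [← add_assoc]
        linarith
    refine this.trans ?_
    have : 0 ≤ 1 / ((L : ℝ) + K) := by positivity
    linarith
  have hs := summable_of_sum_range_le (fun k => by positivity) hb
  exact ⟨hs, hs.tsum_le_of_sum_range_le hb⟩

/-- One step of summation by parts for the tail of a power series. -/
lemma tail_step {w : ℂ} (L : ℕ) {f : ℕ → ℝ}
    (hf : Summable fun k => ((f k : ℝ) : ℂ) * w ^ k)
    (hg : Summable fun k => ((dl f k : ℝ) : ℂ) * w ^ k) :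
    (1 - w) * ∑' k, ((f (L + k) : ℝ) : ℂ) * w ^ (L + k) =
      f L * w ^ L + w * ∑' k, ((dl f (L + k) : ℝ) : ℂ) * w ^ (L + k) := by
  have hf' : Summable fun k => ((f (L + k) : ℝ) : ℂ) * w ^ (L + k) := by
    simpa [add_comm] using (summable_nat_add_iff L).2 hf
  have hg' : Summable fun k => ((dl f (L + k) : ℝ) : ℂ) * w ^ (L + k) := by
    simpa [add_comm] using (summable_nat_add_iff L).2 hg
  have h1 := hf'.tsum_eq_zero_add
  have h2 : ∑' k, ((f (L + (k + 1)) : ℝ) : ℂ) * w ^ (L + (k + 1))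
      = w * ∑' k, ((f (L + k) : ℝ) : ℂ) * w ^ (L + k)
        + w * ∑' k, ((dl f (L + k) : ℝ) : ℂ) * w ^ (L + k) := by
    rw [← mul_add, ← hf'.tsum_add hg', ← tsum_mul_left]
    refine tsum_congr fun k => ?_
    simp only [dl, ← add_assoc]
    push_cast
    ring
  rw [h2] at h1
  simp only [add_zero] at h1
  linear_combination h1

/-- A tail estimate for `∑ f k w ^ k`: the summation by parts is iterated until the remaining sum
converges absolutely. -/
lemma tail_bound {a : ℕ → ℝ} (ha : ∀ k, 0 < a k) {β : ℕ} {A : ℝ} (hA : 0 < A)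
    (hgr : ∀ L k, L ≤ k → a k * ((L : ℝ) + 1) ^ β ≤ A * ((k : ℝ) + 1) ^ β * a L)
    (N j : ℕ) (hNj : β + 2 ≤ N + j) (f : ℕ → ℝ)
    (hf : DSym N f (fun k => a k / ((k : ℝ) + 1) ^ j)) :
    ∃ C : ℝ, 0 ≤ C ∧ ∀ w : ℂ, ‖w‖ < 1 → ∀ L : ℕ, 1 ≤ L → 1 ≤ ‖1 - w‖ * L →
      ‖∑' k, ((f (L + k) : ℝ) : ℂ) * w ^ (L + k)‖ ≤ C * (L * (a L / ((L : ℝ) + 1) ^ j)) := by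
  -- polynomial growth, which gives all the summability needed
  have hpoly : ∀ k, a k ≤ A * a 0 * ((k : ℝ) + 1) ^ β := fun k => by
    have := hgr 0 k (Nat.zero_le _)
    simp only [Nat.cast_zero, zero_add, one_pow, mul_one] at this
    linarith
  have hpoly' : ∀ (j : ℕ) (f : ℕ → ℝ) (C : ℝ), 0 ≤ C →
      (∀ k, |f k| ≤ C * (a k / ((k : ℝ) + 1) ^ j)) →
      ∀ k, |f k| ≤ C * (A * a 0) * ((k : ℝ) + 1) ^ β := by
    intro j f C hC hf k
    refine (hf k).trans ?_
    rw [mul_assoc]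
    refine mul_le_mul_of_nonneg_left ((div_le_self (ha k).le ?_).trans (hpoly k)) hC
    exact one_le_pow₀ (by simp)
  induction N generalizing j f with
  | zero =>
    obtain ⟨C, hC, hf⟩ := hf.bound
    refine ⟨C * A * 4, by positivity, fun w hw L hL hx => ?_⟩
    have hL' : (1 : ℝ) ≤ L := by exact_mod_cast hL
    obtain ⟨i, rfl⟩ : ∃ i, j = β + 2 + i := ⟨j - (β + 2), by omega⟩
    obtain ⟨hs, hle⟩ := sum_inv_sq_le L hL
    have haL := ha L
    set Q : ℝ := C * A * a L / ((L : ℝ) + 1) ^ (β + i) with hQ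
    have hterm : ∀ k : ℕ, ‖((f (L + k) : ℝ) : ℂ) * w ^ (L + k)‖
        ≤ Q * (1 / ((L : ℝ) + k + 1) ^ 2) := by
      intro k
      have hnn : (0 : ℝ) ≤ k := k.cast_nonneg
      have h1 : ‖((f (L + k) : ℝ) : ℂ) * w ^ (L + k)‖ ≤ |f (L + k)| := by
        rw [norm_mul, norm_pow, Complex.norm_real, Real.norm_eq_abs]
        exact mul_le_of_le_one_right (abs_nonneg _) (pow_le_one₀ (norm_nonneg _) hw.le)
      refine h1.trans ((hf _).trans ?_)
      have h2 := hgr L (L + k) (by omega)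
      push_cast at h2 ⊢
      rw [hQ, mul_assoc C A, mul_div_assoc C, mul_assoc]
      refine mul_le_mul_of_nonneg_left ?_ hC
      have h3 : a (L + k) ≤ A * ((L : ℝ) + k + 1) ^ β * a L / ((L : ℝ) + 1) ^ β := by
        rw [le_div_iff₀ (by positivity)]; exact h2
      have h4 : ((L : ℝ) + 1) ^ i ≤ ((L : ℝ) + k + 1) ^ i := by gcongr; linarith
      calc a (L + k) / ((L : ℝ) + k + 1) ^ (β + 2 + i)
          ≤ (A * ((L : ℝ) + k + 1) ^ β * a L / ((L : ℝ) + 1) ^ β)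
              / (((L : ℝ) + k + 1) ^ (β + 2) * ((L : ℝ) + 1) ^ i) := by
            rw [pow_add _ (β + 2) i]
            gcongr
        _ = _ := by field_simp; ring
    refine (tsum_of_norm_bounded (hs.mul_left Q).hasSum hterm).trans ?_
    rw [tsum_mul_left]
    have hQ0 : 0 ≤ Q := by positivity
    refine (mul_le_mul_of_nonneg_left hle hQ0).trans ?_
    have h5 : ((L : ℝ) + 1) ^ 2 ≤ 4 * L ^ 2 := by nlinarith
    rw [hQ, div_mul_div_comm, mul_one, mul_div_assoc', mul_div_assoc',
      div_le_div_iff₀ (by positivity) (by positivity)]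
    calc C * A * a L * ((L : ℝ) + 1) ^ (β + 2 + i)
        = C * A * a L * ((L : ℝ) + 1) ^ (β + i) * ((L : ℝ) + 1) ^ 2 := by ring
      _ ≤ C * A * a L * ((L : ℝ) + 1) ^ (β + i) * (4 * L ^ 2) := by gcongr
      _ = _ := by ring
  | succ N ih =>
    obtain ⟨C, hC, hfb⟩ := hf.bound
    have hd : DSym N (dl f) (fun k => a k / ((k : ℝ) + 1) ^ (j + 1)) := by
      convert hf.2 using 1
      ext k; rw [pow_succ, div_div]
    obtain ⟨C1, hC1, hdb⟩ := hd.bound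
    obtain ⟨C2, hC2, hT⟩ := ih (j + 1) (by omega) (dl f) hd
    refine ⟨C + C2, by positivity, fun w hw L hL hx => ?_⟩
    have hL' : (1 : ℝ) ≤ L := by exact_mod_cast hL
    have hstep := tail_step L (summable_poly hw (hpoly' j f C hC hfb))
      (summable_poly hw (hpoly' (j + 1) (dl f) C1 hC1 hdb))
    have hT' := hT w hw L hL hx
    set T := ∑' k, ((f (L + k) : ℝ) : ℂ) * w ^ (L + k)
    set T' := ∑' k, ((dl f (L + k) : ℝ) : ℂ) * w ^ (L + k)
    have hnorm : ‖1 - w‖ * ‖T‖ ≤ |f L| + ‖T'‖ := by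
      rw [← norm_mul, hstep]
      refine (norm_add_le _ _).trans (add_le_add ?_ ?_)
      · rw [norm_mul, norm_pow, Complex.norm_real, Real.norm_eq_abs]
        exact mul_le_of_le_one_right (abs_nonneg _) (pow_le_one₀ (norm_nonneg _) hw.le)
      · rw [norm_mul]
        exact mul_le_of_le_one_left (norm_nonneg _) hw.le
    have hφ : 0 < a L / ((L : ℝ) + 1) ^ j := div_pos (ha L) (by positivity)
    have h6 : (L : ℝ) * (a L / ((L : ℝ) + 1) ^ (j + 1)) ≤ a L / ((L : ℝ) + 1) ^ j := by
      rw [pow_succ, ← div_div, mul_div_assoc']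
      rw [div_le_iff₀ (by positivity)]
      nlinarith
    calc ‖T‖ ≤ (‖1 - w‖ * L) * ‖T‖ := le_mul_of_one_le_left (norm_nonneg _) hx
      _ = L * (‖1 - w‖ * ‖T‖) := by ring
      _ ≤ L * (C * (a L / ((L : ℝ) + 1) ^ j) + C2 * (a L / ((L : ℝ) + 1) ^ j)) := by
          refine mul_le_mul_of_nonneg_left (hnorm.trans (add_le_add (hfb L) ?_)) (by positivity)
          exact hT'.trans (mul_le_mul_of_nonneg_left h6 hC2)
      _ = _ := by ring

/-- If `m` is completely monotone and doubling, then `∑ w ^ k / m k` is at most a constant times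
`L / m L` on the region `1 ≤ L |1 - w|` of the unit disc. -/
theorem kernel_bound {m : ℕ → ℝ} (hcm : ∀ j k, 0 ≤ cmd m j k) {D : ℝ} (hD0 : 0 ≤ D)
    (hD : ∀ k, m k ≤ D * m (2 * k + 1)) (hm : ∀ k, 0 < m k) :
    ∃ C : ℝ, 0 < C ∧ ∀ w : ℂ, ‖w‖ < 1 →
      (Summable fun k => (((m k)⁻¹ : ℝ) : ℂ) * w ^ k) ∧
      ∀ L : ℕ, 1 ≤ L → 1 ≤ ‖1 - w‖ * L →
      ‖∑' k, (((m k)⁻¹ : ℝ) : ℂ) * w ^ k‖ ≤ C * (L * (m L)⁻¹) := by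
  obtain ⟨β, A, hA, hgr⟩ := growth hcm hD0 hD hm
  have ha : ∀ k, 0 < (m k)⁻¹ := fun k => inv_pos.2 (hm k)
  obtain ⟨C, hC, hT⟩ := tail_bound ha hA hgr (β + 2) 0 le_rfl (fun k => (m k)⁻¹)
    (by simpa using sym_inv hcm hD0 hD hm (β + 2))
  refine ⟨1 + C, by positivity, fun w hw => ?_⟩
  have hs : Summable fun k => (((m k)⁻¹ : ℝ) : ℂ) * w ^ k := by
    refine summable_poly hw (A := A * (m 0)⁻¹) (β := β) fun k => ?_
    have := hgr 0 k (Nat.zero_le _)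
    simp only [Nat.cast_zero, zero_add, one_pow, mul_one] at this
    rw [abs_of_pos (ha k)]
    linarith
  refine ⟨hs, fun L hL hx => ?_⟩
  rw [← hs.sum_add_tsum_nat_add L, add_mul, one_mul]
  refine (norm_add_le _ _).trans (add_le_add ?_ ?_)
  · refine (norm_sum_le_of_le (f := fun k => (((m k)⁻¹ : ℝ) : ℂ) * w ^ k) _
      (n := fun _ => (m L)⁻¹) fun k hk => ?_).trans ?_
    · rw [norm_mul, norm_pow, Complex.norm_real, Real.norm_eq_abs, abs_of_pos (ha k)]
      refine (mul_le_of_le_one_right (ha k).le (pow_le_one₀ (norm_nonneg _) hw.le)).trans ?_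
      exact inv_anti₀ (hm L) (cmd_anti hcm 0 (Finset.mem_range.1 hk).le)
    · simp
  · simpa [add_comm] using hT w hw L hL hx

/-! ### Averaging over rotations -/

/-- Measures on `ℂⁿ` invariant under the unitary group. -/
def RotInv {n : ℕ} (ν : Measure (En n)) : Prop :=
  ∀ U : En n ≃ₗᵢ[ℂ] En n, MeasurePreserving U ν ν

lemma integral_circleAverage {n : ℕ} (ν : Measure (En n)) [IsFiniteMeasure ν]
    (V : ℂ → En n → En n) (hV : Continuous (Function.uncurry V))
    (hVν : ∀ l : ℂ, ‖l‖ = 1 → MeasurePreserving (V l) ν ν)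
    {Φ : En n → ℂ} (hΦ : Integrable Φ ν) :
    Integrable (fun u => Real.circleAverage (fun l => Φ (V l u)) 0 1) ν ∧
      ∫ u, Φ u ∂ν = ∫ u, Real.circleAverage (fun l => Φ (V l u)) 0 1 ∂ν := by
  set P : Measure ℝ := volume.restrict (Set.Ioc 0 (2 * Real.pi)) with hP
  have hmp : MeasurePreserving (fun x : ℝ × En n => (x.1, V (circleMap 0 1 x.1) x.2))
      (P.prod ν) (P.prod ν) := by
    refine MeasurePreserving.skew_product (f := id)
      (g := fun (θ : ℝ) (u : En n) => V (circleMap 0 1 θ) u) (MeasurePreserving.id P) ?_ ?_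
    · refine Continuous.measurable ?_
      exact hV.comp (((continuous_circleMap 0 1).comp continuous_fst).prodMk continuous_snd)
    · exact Eventually.of_forall fun θ => (hVν _ (by simp)).map_eq
  have hInt : Integrable (fun x : ℝ × En n => Φ (V (circleMap 0 1 x.1) x.2)) (P.prod ν) :=
    hmp.integrable_comp_of_integrable (g := fun x : ℝ × En n => Φ x.2) (hΦ.comp_snd P)
  have hswap := integral_integral_swap
    (f := fun (θ : ℝ) (u : En n) => Φ (V (circleMap 0 1 θ) u)) hInt
  have hin : ∀ θ : ℝ, ∫ u, Φ (V (circleMap 0 1 θ) u) ∂ν = ∫ u, Φ u ∂ν := by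
    intro θ
    have h := hVν (circleMap 0 1 θ) (by simp)
    rw [← integral_map h.measurable.aemeasurable, h.map_eq]
    rw [h.map_eq]; exact hΦ.aestronglyMeasurable
  simp_rw [hin] at hswap
  have hc : ∀ u, Real.circleAverage (fun l => Φ (V l u)) 0 1
      = (2 * Real.pi)⁻¹ • ∫ θ, Φ (V (circleMap 0 1 θ) u) ∂P := by
    intro u
    rw [Real.circleAverage, intervalIntegral.integral_of_le (by positivity)]
  simp_rw [hc]
  refine ⟨hInt.integral_prod_right.smul (2 * Real.pi)⁻¹, ?_⟩
  rw [integral_smul, ← hswap, integral_const, smul_smul]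
  have : P.real Set.univ = 2 * Real.pi := by
    simp [hP, measureReal_def, Real.pi_pos.le]
  rw [this, inv_mul_cancel₀ (by positivity), one_smul]

lemma circleAverage_pow (j k : ℕ) :
    Real.circleAverage (fun l : ℂ => l ^ j * (starRingEnd ℂ) l ^ k) 0 1
      = if j = k then 1 else 0 := by
  have key : ∀ d : ℕ, Real.circleAverage (fun l : ℂ => l ^ d) 0 1 = 0 ^ d := fun d => by
    refine DiffContOnCl.circleAverage (f := fun l : ℂ => l ^ d) ?_
    exact (differentiable_id.pow d).diffContOnCl
  have hl : ∀ l : ℂ, ‖l‖ = 1 → l * (starRingEnd ℂ) l = 1 := fun l hl => by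
    rw [Complex.mul_conj, Complex.normSq_eq_norm_sq, hl]; simp
  rcases le_total k j with h | h
  · obtain ⟨d, rfl⟩ := Nat.exists_eq_add_of_le h
    rw [Real.circleAverage_congr_sphere (f₂ := fun l : ℂ => l ^ d), key]
    · rcases eq_or_ne d 0 with rfl | hd
      · simp
      · simp [hd]
    · intro l hl'
      have h1 : ‖l‖ = 1 := by simpa using hl'
      simp only
      rw [pow_add, mul_right_comm, ← mul_pow, hl l h1, one_pow, one_mul]
  · obtain ⟨d, rfl⟩ := Nat.exists_eq_add_of_le h
    have h2 : Real.circleAverage (fun l : ℂ => l ^ j * (starRingEnd ℂ) l ^ (j + d)) 0 1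
        = (starRingEnd ℂ) (Real.circleAverage (fun l : ℂ => l ^ d) 0 1) := by
      rw [Real.circleAverage_congr_sphere (f₂ := fun l : ℂ => (starRingEnd ℂ) (l ^ d))]
      · simp only [Real.circleAverage, Complex.real_smul, map_mul, Complex.conj_ofReal]
        congr 1
        rw [intervalIntegral.integral_of_le (by positivity),
          intervalIntegral.integral_of_le (by positivity), integral_conj]
      · intro l hl'
        have h1 : ‖l‖ = 1 := by simpa using hl'
        simp only
        rw [pow_add, ← mul_assoc, ← mul_pow, hl l h1, one_pow, one_mul, map_pow]
    rw [h2, key]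
    rcases eq_or_ne d 0 with rfl | hd
    · simp
    · simp [hd]

/-- Extraction of a Taylor coefficient by averaging over a circle. -/
lemma circleAverage_coeff {G : ℂ → ℂ} {a : ℕ → ℂ}
    (hG : ∀ s : ℂ, ‖s‖ < 1 → HasSum (fun j => a j * s ^ j) (G s)) (k : ℕ) {s : ℂ}
    (hs : ‖s‖ < 1) :
    Real.circleAverage (fun l => G (l * s) * (starRingEnd ℂ) (l * s) ^ k) 0 1
      = a k * ((‖s‖ ^ (2 * k) : ℝ) : ℂ) := by
  set F : ℕ → ℝ → ℂ := fun j θ =>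
    (a j * s ^ j * (starRingEnd ℂ) s ^ k) *
      ((circleMap 0 1 θ) ^ j * (starRingEnd ℂ) (circleMap 0 1 θ) ^ k) with hF
  have hnc : ∀ θ, ‖circleMap 0 1 θ‖ = 1 := fun θ => by simp
  have hsum : Summable fun j => ‖a j * s ^ j‖ := (hG s hs).summable.norm
  have hlim : ∀ θ : ℝ, HasSum (fun j => F j θ)
      (G (circleMap 0 1 θ * s) * (starRingEnd ℂ) (circleMap 0 1 θ * s) ^ k) := by
    intro θ
    have h1 := (hG (circleMap 0 1 θ * s) (by rw [norm_mul, hnc]; simpa using hs)).mul_right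
      ((starRingEnd ℂ) (circleMap 0 1 θ * s) ^ k)
    have e1 : (fun j => F j θ) = fun j => a j * (circleMap 0 1 θ * s) ^ j *
        (starRingEnd ℂ) (circleMap 0 1 θ * s) ^ k := by
      funext j
      simp only [hF, map_mul, mul_pow]; ring
    rw [e1]; exact h1
  have hI := intervalIntegral.hasSum_integral_of_dominated_convergence (μ := volume) (a := 0)
    (b := 2 * Real.pi) (F := F)
    (f := fun θ => G (circleMap 0 1 θ * s) * (starRingEnd ℂ) (circleMap 0 1 θ * s) ^ k)
    (bound := fun j _ => ‖a j * s ^ j‖ * ‖s‖ ^ k)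
    (fun j => by
      refine Continuous.aestronglyMeasurable ?_
      simp only [hF]
      have := continuous_circleMap 0 1
      fun_prop)
    (fun j => Eventually.of_forall fun θ _ => by
      simp only [hF, norm_mul, norm_pow, RCLike.norm_conj, hnc]
      simp)
    (Eventually.of_forall fun θ _ => hsum.mul_right _)
    (by simp) (Eventually.of_forall fun θ _ => hlim θ)
  have hI2 := hI.const_smul ((2 * Real.pi)⁻¹)
  have hterm : ∀ j, (2 * Real.pi)⁻¹ • ∫ θ in (0 : ℝ)..(2 * Real.pi), F j θ
      = if j = k then a k * s ^ k * (starRingEnd ℂ) s ^ k else 0 := by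
    intro j
    have := circleAverage_pow j k
    rw [Real.circleAverage] at this
    simp only [hF]
    rw [intervalIntegral.integral_const_mul, ← mul_smul_comm, this]
    split_ifs with h
    · subst h; simp
    · simp
  simp_rw [hterm] at hI2
  have h3 := hI2.unique (hasSum_ite_eq k (a k * s ^ k * (starRingEnd ℂ) s ^ k))
  rw [Real.circleAverage, h3, mul_assoc, ← mul_pow, Complex.mul_conj, Complex.normSq_eq_norm_sq]
  push_cast
  rw [pow_mul]

lemma norm_inner_lt {n : ℕ} {e u : En n} (he : ‖e‖ ≤ 1) (hu : u ∈ Bl n) : ‖inner ℂ e u‖ < 1 := by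
  have hu' : ‖u‖ < 1 := by simpa [Bl] using hu
  refine (norm_inner_le_norm e u).trans_lt ?_
  nlinarith [norm_nonneg u]

/-- Multiplication by a unimodular scalar is unitary, hence preserves `ν`. -/
lemma RotInv.smul {n : ℕ} {ν : Measure (En n)} (h : RotInv ν) (l : ℂ) (hl : ‖l‖ = 1) :
    MeasurePreserving (fun u : En n => l • u) ν ν := by
  have hl0 : l ≠ 0 := by rintro rfl; simp at hl
  let U : En n ≃ₗᵢ[ℂ] En n :=
    { LinearEquiv.smulOfNeZero ℂ (En n) l hl0 with
      norm_map' := fun u => by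
        change ‖l • u‖ = ‖u‖
        rw [norm_smul, hl, one_mul] }
  exact h U

/-- Integration of a holomorphic function of `⟨e, u⟩` against a power of its conjugate. -/
lemma integral_coeff {n : ℕ} {ν : Measure (En n)} [IsFiniteMeasure ν] (hν : RotInv ν)
    (hB : ∀ᵐ u ∂ν, u ∈ Bl n) {e : En n} (he : ‖e‖ ≤ 1) {G : ℂ → ℂ} {a : ℕ → ℂ}
    (hG : ∀ s : ℂ, ‖s‖ < 1 → HasSum (fun j => a j * s ^ j) (G s)) (k : ℕ)
    (hInt : Integrable (fun u => G (inner ℂ e u) * (starRingEnd ℂ) (inner ℂ e u) ^ k) ν) :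
    ∫ u, G (inner ℂ e u) * (starRingEnd ℂ) (inner ℂ e u) ^ k ∂ν
      = a k * ((∫ u, ‖inner ℂ e u‖ ^ (2 * k) ∂ν : ℝ) : ℂ) := by
  rw [(integral_circleAverage ν (fun l u => l • u) (by fun_prop) hν.smul hInt).2]
  have : ∀ᵐ u ∂ν, Real.circleAverage (fun l => G (inner ℂ e (l • u)) *
      (starRingEnd ℂ) (inner ℂ e (l • u)) ^ k) 0 1
      = a k * ((‖inner ℂ e u‖ ^ (2 * k) : ℝ) : ℂ) := by
    filter_upwards [hB] with u hu
    simp_rw [inner_smul_right]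
    exact circleAverage_coeff hG k (norm_inner_lt he hu)
  rw [integral_congr_ae this, integral_const_mul]
  congr 1
  exact integral_ofReal

/-- The unitary rotation of the orthogonal complement of a unit vector `e` by the scalar `l`. -/
def rotPerp {n : ℕ} (e : En n) (l : ℂ) (u : En n) : En n :=
  (inner ℂ e u) • e + l • (u - (inner ℂ e u) • e)

lemma norm_rotPerp {n : ℕ} {e : En n} (he : ‖e‖ = 1) (l : ℂ) (u : En n) :
    ‖rotPerp e l u‖ ^ 2 = ‖inner ℂ e u‖ ^ 2 + ‖l‖ ^ 2 * ‖u - (inner ℂ e u) • e‖ ^ 2 := by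
  have h0 : inner ℂ ((inner ℂ e u) • e) (l • (u - (inner ℂ e u) • e)) = 0 := by
    rw [inner_smul_left, inner_smul_right, inner_sub_right, inner_smul_right,
      inner_self_eq_norm_sq_to_K, he]
    simp
  have := norm_add_sq_eq_norm_sq_add_norm_sq_of_inner_eq_zero _ _ h0
  rw [rotPerp, sq, this, norm_smul, norm_smul, he]
  ring

lemma norm_rotPerp_le {n : ℕ} {e : En n} (he : ‖e‖ = 1) {l : ℂ} (hl : ‖l‖ ≤ 1) (u : En n) :
    ‖rotPerp e l u‖ ≤ ‖u‖ := by
  have h1 := norm_rotPerp he l u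
  have h2 := norm_rotPerp he 1 u
  have h3 : rotPerp e 1 u = u := by simp [rotPerp]
  rw [h3, norm_one] at h2
  rw [← pow_le_pow_iff_left₀ (norm_nonneg _) (norm_nonneg _) two_ne_zero, h1, h2]
  gcongr

lemma RotInv.rotPerp {n : ℕ} {ν : Measure (En n)} (h : RotInv ν) {e : En n} (he : ‖e‖ = 1)
    (l : ℂ) (hl : ‖l‖ = 1) : MeasurePreserving (rotPerp e l) ν ν := by
  let T : En n →ₗᵢ[ℂ] En n :=
    { toFun := _root_.rotPerp e l
      map_add' := fun x y => by
        simp only [_root_.rotPerp, inner_add_right, add_smul, smul_sub, smul_add]; abel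
      map_smul' := fun c x => by
        simp only [_root_.rotPerp, inner_smul_right, RingHom.id_apply, smul_sub, smul_add, smul_smul]
        congr 2
        · rw [mul_comm]
        · rw [show l * (c * inner ℂ e x) = c * (l * inner ℂ e x) by ring]
      norm_map' := fun u => by
        have h1 := norm_rotPerp he l u
        have h2 := norm_rotPerp he 1 u
        have h3 : _root_.rotPerp e 1 u = u := by simp [_root_.rotPerp]
        rw [h3, norm_one] at h2
        rw [hl, ← h2] at h1
        exact (pow_left_inj₀ (norm_nonneg _) (norm_nonneg _) two_ne_zero).1 h1 }
  exact h (T.toLinearIsometryEquiv rfl)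

/-- For `f` holomorphic in the ball, `∫ f(u) conj⟨e,u⟩^k dν` only sees the restriction of `f` to the
complex line spanned by the unit vector `e`. -/
lemma integral_slice {n : ℕ} {ν : Measure (En n)} [IsFiniteMeasure ν] (hν : RotInv ν)
    (hB : ∀ᵐ u ∂ν, u ∈ Bl n) {e : En n} (he : ‖e‖ = 1) {f : En n → ℂ}
    (hf : DifferentiableOn ℂ f (Bl n)) (k : ℕ)
    (hInt : Integrable (fun u => f u * (starRingEnd ℂ) (inner ℂ e u) ^ k) ν) {a : ℕ → ℂ}
    (ha : ∀ s : ℂ, ‖s‖ < 1 → HasSum (fun j => a j * s ^ j) (f (s • e))) :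
    ∫ u, f u * (starRingEnd ℂ) (inner ℂ e u) ^ k ∂ν
      = a k * ((∫ u, ‖inner ℂ e u‖ ^ (2 * k) ∂ν : ℝ) : ℂ) := by
  have hcont : Continuous (Function.uncurry (rotPerp e)) := by
    unfold rotPerp Function.uncurry; fun_prop
  obtain ⟨hi, heq⟩ := integral_circleAverage ν (rotPerp e) hcont
    (fun l hl => hν.rotPerp he l hl) hInt
  have hin : ∀ (l : ℂ) (u : En n), inner ℂ e (rotPerp e l u) = inner ℂ e u := by
    intro l u
    simp only [rotPerp, inner_add_right, inner_smul_right, inner_sub_right,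
      inner_self_eq_norm_sq_to_K, he]
    simp
  have hav : ∀ᵐ u ∂ν, Real.circleAverage (fun l => f (rotPerp e l u) *
      (starRingEnd ℂ) (inner ℂ e (rotPerp e l u)) ^ k) 0 1
      = f ((inner ℂ e u) • e) * (starRingEnd ℂ) (inner ℂ e u) ^ k := by
    filter_upwards [hB] with u hu
    simp_rw [hin]
    have hd : DiffContOnCl ℂ (fun l => f (rotPerp e l u) *
        (starRingEnd ℂ) (inner ℂ e u) ^ k) (ball 0 1) := by
      refine DifferentiableOn.diffContOnCl ?_
      have hmap : Set.MapsTo (fun l : ℂ => rotPerp e l u) (closure (ball 0 1)) (Bl n) := by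
        intro l hl
        rw [closure_ball _ one_ne_zero] at hl
        have h1 := norm_rotPerp_le he (l := l) (by simpa using hl) u
        have h2 : ‖u‖ < 1 := by simpa [Bl] using hu
        simpa [Bl] using h1.trans_lt h2
      refine DifferentiableOn.mul_const (hf.comp ?_ hmap) _
      unfold rotPerp
      fun_prop
    have := DiffContOnCl.circleAverage (c := 0) (R := 1) (by rw [abs_one]; exact hd)
    rw [this]
    simp [rotPerp]
  rw [heq, integral_congr_ae hav]
  exact integral_coeff hν hB he.le ha k (hi.congr hav)

/-! ### Moments of rotation invariant measures -/

lemma integrable_of_continuous {n : ℕ} {ν : Measure (En n)} [IsFiniteMeasure ν]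
    (hB : ∀ᵐ u ∂ν, u ∈ Bl n) {F : Type*} [NormedAddCommGroup F] [SecondCountableTopology F]
    {g : En n → F} (hg : Continuous g) : Integrable g ν := by
  obtain ⟨C, hC⟩ := (isCompact_closedBall (0 : En n) 1).exists_bound_of_continuousOn hg.continuousOn
  refine Integrable.of_bound hg.aestronglyMeasurable C ?_
  filter_upwards [hB] with u hu
  exact hC u (ball_subset_closedBall hu)

/-- The homogeneous polynomial `⟨v,u⟩^k ⟨v',u⟩` paired with `⟨e,u⟩^{k+1}`: only its value at `e`
matters. -/
lemma integral_pow_mul_inner {n : ℕ} {ν : Measure (En n)} [IsFiniteMeasure ν] (hν : RotInv ν)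
    (hB : ∀ᵐ u ∂ν, u ∈ Bl n) {e : En n} (he : ‖e‖ = 1) (v v' : En n) (k : ℕ) :
    ∫ u, (inner ℂ v u) ^ k * inner ℂ v' u * (starRingEnd ℂ) (inner ℂ e u) ^ (k + 1) ∂ν
      = (inner ℂ v e) ^ k * inner ℂ v' e * ((∫ u, ‖inner ℂ e u‖ ^ (2 * (k + 1)) ∂ν : ℝ) : ℂ) := by
  have := integral_slice hν hB he (f := fun u => (inner ℂ v u) ^ k * inner ℂ v' u)
    (Differentiable.differentiableOn (by
      have h1 : ∀ x : En n, Differentiable ℂ (fun u : En n => (inner ℂ x u : ℂ)) := fun x =>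
        (innerSL ℂ x).differentiable
      exact ((h1 v).pow k).mul (h1 v'))) (k + 1)
    (integrable_of_continuous hB (by fun_prop))
    (a := fun j => if j = k + 1 then (inner ℂ v e) ^ k * inner ℂ v' e else 0) (fun s _ => by
      have := hasSum_ite_eq (k + 1) ((inner ℂ v e) ^ k * inner ℂ v' e * s ^ (k + 1))
      have e1 : (fun j => (if j = k + 1 then (inner ℂ v e) ^ k * inner ℂ v' e else 0) * s ^ j)
          = fun j => if j = k + 1 then (inner ℂ v e) ^ k * inner ℂ v' e * s ^ (k + 1) else 0 := by
        funext j; split_ifs with h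
        · rw [h]
        · simp
      simp only [inner_smul_right]
      rw [e1, show (s * inner ℂ v e) ^ k * (s * inner ℂ v' e)
        = (inner ℂ v e) ^ k * inner ℂ v' e * s ^ (k + 1) by ring]
      exact this)
  simpa using this

/-- A unit vector belongs to some orthonormal basis. -/
lemma exists_basis {n : ℕ} {e : En n} (he : ‖e‖ = 1) :
    ∃ (i : Fin n) (b : OrthonormalBasis (Fin n) ℂ (En n)), b i = e := by
  have hn : n ≠ 0 := by
    rintro rfl
    have : e = 0 := Subsingleton.elim _ _
    simp [this] at he
  let i : Fin n := ⟨0, Nat.pos_of_ne_zero hn⟩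
  obtain ⟨b, hb⟩ := Orthonormal.exists_orthonormalBasis_extension_of_card_eq (𝕜 := ℂ)
    (E := En n) (ι := Fin n) (by simp) (v := fun _ => e) (s := {i}) (by
      rw [orthonormal_iff_ite]
      rintro ⟨x, hx⟩ ⟨y, hy⟩
      have hx' : x = i := hx
      have hy' : y = i := hy
      subst hx' hy'
      simp [he])
  exact ⟨i, b, hb i rfl⟩

lemma exists_unitary {n : ℕ} {e e' : En n} (he : ‖e‖ = 1) (he' : ‖e'‖ = 1) :
    ∃ U : En n ≃ₗᵢ[ℂ] En n, U e = e' := by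
  obtain ⟨i, b, hb⟩ := exists_basis he
  obtain ⟨i', b', hb'⟩ := exists_basis he'
  refine ⟨b.equiv b' (Equiv.swap i i'), ?_⟩
  rw [← hb, OrthonormalBasis.equiv_apply_basis, Equiv.swap_apply_left, hb']

lemma moment_unit_eq {n : ℕ} {ν : Measure (En n)} (hν : RotInv ν)
    {e e' : En n} (he : ‖e‖ = 1) (he' : ‖e'‖ = 1) (k : ℕ) :
    ∫ u, ‖(inner ℂ e u : ℂ)‖ ^ k ∂ν = ∫ u, ‖(inner ℂ e' u : ℂ)‖ ^ k ∂ν := by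
  obtain ⟨U, hU⟩ := exists_unitary he he'
  have := (hν U).integral_comp U.toHomeomorph.measurableEmbedding
    (fun u => ‖(inner ℂ e' u : ℂ)‖ ^ k)
  rw [← this, ← hU]
  simp

/-- The mixed moment `∫ |⟨e,u⟩|^{2k} |⟨e',u⟩|² dν` for orthogonal unit vectors: the moments of
`⟨w,u⟩` for `w = e + T e'` only depend on `‖w‖`, and the coefficients of `T` are compared. -/
lemma moment_mixed {n : ℕ} {ν : Measure (En n)} [IsFiniteMeasure ν] (hν : RotInv ν)
    (hB : ∀ᵐ u ∂ν, u ∈ Bl n) {e e' : En n} (he : ‖e‖ = 1) (he' : ‖e'‖ = 1)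
    (hee : inner ℂ e e' = (0 : ℂ)) (k : ℕ) :
    (k + 1) * ∫ u, ‖(inner ℂ e u : ℂ)‖ ^ (2 * k) * ‖(inner ℂ e' u : ℂ)‖ ^ 2 ∂ν
      = ∫ u, ‖(inner ℂ e u : ℂ)‖ ^ (2 * (k + 1)) ∂ν := by
  set m : ℝ := ∫ u, ‖(inner ℂ e u : ℂ)‖ ^ (2 * (k + 1)) ∂ν with hm
  have hee' : inner ℂ e' e = (0 : ℂ) := inner_eq_zero_symm.1 hee
  have hself : inner ℂ e e = (1 : ℂ) := by rw [inner_self_eq_norm_sq_to_K, he]; simp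
  have hself' : inner ℂ e' e' = (1 : ℂ) := by rw [inner_self_eq_norm_sq_to_K, he']; simp
  set c : ℕ → ℂ := fun j => ∫ u, (inner ℂ e u) ^ k * inner ℂ e' u *
    ((starRingEnd ℂ) (inner ℂ e' u) ^ j * (starRingEnd ℂ) (inner ℂ e u) ^ (k + 1 - j)) ∂ν with hc
  have key : ∀ T : ℂ, ∑ j ∈ Finset.range (k + 2), T ^ j * (((k + 1).choose j : ℂ) * c j)
      = T * (m : ℂ) := by
    intro T
    set w : En n := e + T • e' with hw
    have hew : inner ℂ e w = (1 : ℂ) := by rw [hw, inner_add_right, inner_smul_right, hself, hee]; simp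
    have hew' : inner ℂ e' w = T := by
      rw [hw, inner_add_right, inner_smul_right, hself', hee']; simp
    have hw0 : w ≠ 0 := by intro h; rw [h] at hew; simp at hew
    have hwn : (‖w‖ : ℂ) ≠ 0 := by simpa using hw0
    set w' : En n := ((‖w‖ : ℂ)⁻¹) • w with hw'
    have hw1 : ‖w'‖ = 1 := by rw [hw', norm_smul]; simp [hw0]
    have h1 := integral_pow_mul_inner hν hB hw1 e e' k
    rw [← moment_unit_eq hν he hw1, ← hm] at h1
    have h2 : ∀ u, (starRingEnd ℂ) (inner ℂ w' u) = (‖w‖ : ℂ)⁻¹ *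
        (T * (starRingEnd ℂ) (inner ℂ e' u) + (starRingEnd ℂ) (inner ℂ e u)) := by
      intro u
      rw [hw', hw, inner_smul_left, inner_add_left, inner_smul_left]
      simp only [map_mul, map_inv₀, Complex.conj_ofReal, map_add, Complex.conj_conj]
      ring
    simp_rw [h2] at h1
    rw [hw', inner_smul_right, inner_smul_right, hew, hew'] at h1
    have h3 : ∫ u, (inner ℂ e u) ^ k * inner ℂ e' u * (T * (starRingEnd ℂ) (inner ℂ e' u) +
        (starRingEnd ℂ) (inner ℂ e u)) ^ (k + 1) ∂ν = T * (m : ℂ) := by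
      have h4 : ∀ u, (inner ℂ e u) ^ k * inner ℂ e' u * ((‖w‖ : ℂ)⁻¹ *
          (T * (starRingEnd ℂ) (inner ℂ e' u) + (starRingEnd ℂ) (inner ℂ e u))) ^ (k + 1)
          = ((‖w‖ : ℂ)⁻¹) ^ (k + 1) * ((inner ℂ e u) ^ k * inner ℂ e' u *
          (T * (starRingEnd ℂ) (inner ℂ e' u) + (starRingEnd ℂ) (inner ℂ e u)) ^ (k + 1)) := by
        intro u; rw [mul_pow]; ring
      simp_rw [h4] at h1
      rw [integral_const_mul, mul_one, ← mul_assoc, ← pow_succ, mul_assoc] at h1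
      exact mul_left_cancel₀ (pow_ne_zero _ (inv_ne_zero hwn)) h1
    rw [← h3]
    simp_rw [add_pow, Finset.mul_sum]
    rw [integral_finsetSum _ (fun j _ => integrable_of_continuous hB (by fun_prop))]
    refine Finset.sum_congr rfl fun j _ => ?_
    rw [hc, ← integral_const_mul, ← integral_const_mul]
    refine integral_congr_ae (Eventually.of_forall fun u => ?_)
    simp only [mul_pow]
    ring
  have hpoly : (∑ j ∈ Finset.range (k + 2),
      Polynomial.monomial j (((k + 1).choose j : ℂ) * c j)) = Polynomial.monomial 1 (m : ℂ) := by
    refine Polynomial.funext fun T => ?_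
    rw [Polynomial.eval_finsetSum]
    simp only [Polynomial.eval_monomial]
    rw [pow_one, mul_comm, ← key T]
    exact Finset.sum_congr rfl fun j _ => mul_comm _ _
  have hco := congrArg (fun P => Polynomial.coeff P 1) hpoly
  simp only [Polynomial.finsetSum_coeff, Polynomial.coeff_monomial] at hco
  rw [Finset.sum_ite_eq' (Finset.range (k + 2)) 1] at hco
  simp only [Finset.mem_range, show 1 < k + 2 by omega, if_true, Nat.choose_one_right] at hco
  have hc1 : c 1 = ((∫ u, ‖(inner ℂ e u : ℂ)‖ ^ (2 * k) * ‖(inner ℂ e' u : ℂ)‖ ^ 2 ∂ν : ℝ) : ℂ) := by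
    rw [hc]
    refine Eq.trans (integral_congr_ae (Eventually.of_forall fun u => ?_)) integral_complex_ofReal
    simp only [pow_one, Nat.add_sub_cancel]
    have h5 : ∀ z : ℂ, z * (starRingEnd ℂ) z = (‖z‖ : ℂ) ^ 2 := Complex.mul_conj'
    push_cast
    rw [pow_mul, ← h5, ← h5, mul_pow]
    ring
  rw [hc1] at hco
  exact_mod_cast hco

lemma moment_norm {n : ℕ} {ν : Measure (En n)} [IsFiniteMeasure ν] (hν : RotInv ν)
    (hB : ∀ᵐ u ∂ν, u ∈ Bl n) {e : En n} (he : ‖e‖ = 1) (k : ℕ) :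
    (k + 1) * ∫ u, ‖(inner ℂ e u : ℂ)‖ ^ (2 * k) * ‖u‖ ^ 2 ∂ν
      = (k + n) * ∫ u, ‖(inner ℂ e u : ℂ)‖ ^ (2 * (k + 1)) ∂ν := by
  obtain ⟨i, b, hb⟩ := exists_basis he
  have h1 : ∀ u : En n, ‖(inner ℂ e u : ℂ)‖ ^ (2 * k) * ‖u‖ ^ 2
      = ∑ j, ‖(inner ℂ e u : ℂ)‖ ^ (2 * k) * ‖(inner ℂ (b j) u : ℂ)‖ ^ 2 := by
    intro u
    rw [← Finset.mul_sum, b.sum_sq_norm_inner_right]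
  simp_rw [h1]
  rw [integral_finsetSum _ (fun j _ => integrable_of_continuous hB (by fun_prop)), Finset.mul_sum,
    ← Finset.add_sum_erase _ _ (Finset.mem_univ i)]
  rw [Finset.sum_congr rfl (g := fun _ => ∫ u, ‖(inner ℂ e u : ℂ)‖ ^ (2 * (k + 1)) ∂ν)]
  · have hn : 1 ≤ n := i.pos
    rw [Finset.sum_const, Finset.card_erase_of_mem (Finset.mem_univ i), hb]
    simp only [Finset.card_univ, Fintype.card_fin, nsmul_eq_mul, ← pow_add]
    rw [Nat.cast_sub hn, show 2 * k + 2 = 2 * (k + 1) by ring]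
    push_cast
    ring
  · intro j hj
    refine moment_mixed hν hB he (b.norm_eq_one j) ?_ k
    rw [← hb, b.inner_eq_zero (Finset.ne_of_mem_erase hj).symm]

/-- The normalized moments `∫ |ζ₁|^{2k} dσ` of the unit sphere of `ℂⁿ`. -/
def sphMom (n k : ℕ) : ℝ := ∏ j ∈ Finset.range k, ((j + 1 : ℝ) / (j + n))

/-- Densities depending only on the norm keep rotation invariance. -/
lemma RotInv.withDensity {n : ℕ} {ν : Measure (En n)} (hν : RotInv ν) {g : ℝ → ENNReal}
    (hg : Measurable g) : RotInv (ν.withDensity fun u => g ‖u‖) := by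
  intro U
  have hgm : Measurable fun u : En n => g ‖u‖ := hg.comp measurable_norm
  refine ⟨U.continuous.measurable, ?_⟩
  ext s hs
  rw [Measure.map_apply U.continuous.measurable hs, withDensity_apply _ hs,
    withDensity_apply _ (U.continuous.measurable hs)]
  have := (hν U).setLIntegral_comp_preimage hs hgm
  simpa using this

lemma moment_eq {n : ℕ} (hn : 1 ≤ n) {e : En n} (he : ‖e‖ = 1) (k : ℕ) :
    ∀ {ν : Measure (En n)} [IsFiniteMeasure ν], RotInv ν → (∀ᵐ u ∂ν, u ∈ Bl n) →
    ∫ u, ‖(inner ℂ e u : ℂ)‖ ^ (2 * k) ∂ν = sphMom n k * ∫ u, ‖u‖ ^ (2 * k) ∂ν := by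
  induction k with
  | zero => intro ν _ _ _; simp [sphMom]
  | succ k ih =>
    intro ν _ hν hB
    set ν' := ν.withDensity fun u => ENNReal.ofReal (‖u‖ ^ 2) with hν'
    have hden : ∀ g : En n → ℝ, ∫ u, g u ∂ν' = ∫ u, g u * ‖u‖ ^ 2 ∂ν := by
      intro g
      rw [hν', integral_withDensity_eq_integral_toReal_smul (by fun_prop) (by simp)]
      refine integral_congr_ae (Eventually.of_forall fun u => ?_)
      simp only [smul_eq_mul]
      rw [ENNReal.toReal_ofReal (by positivity), mul_comm]
    have hfin : IsFiniteMeasure ν' :=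
      isFiniteMeasure_withDensity_ofReal (integrable_of_continuous hB (by fun_prop)).2
    have h1 := ih (ν := ν') (hν.withDensity (g := fun r => ENNReal.ofReal (r ^ 2)) (by fun_prop))
      ((withDensity_absolutelyContinuous _ _).ae_le hB)
    rw [hden, hden] at h1
    have h2 := moment_norm hν hB he k
    rw [h1] at h2
    have h3 : (k + n : ℝ) ≠ 0 := by positivity
    rw [sphMom, Finset.prod_range_succ, ← sphMom]
    have h4 : ∀ u : En n, ‖u‖ ^ (2 * k) * ‖u‖ ^ 2 = ‖u‖ ^ (2 * (k + 1)) := fun u => by ring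
    simp_rw [h4] at h2
    field_simp
    linarith

lemma choose_mul_sphMom (d k : ℕ) : ((k + d).choose d : ℝ) * sphMom (d + 1) k = 1 := by
  induction k with
  | zero => simp [sphMom]
  | succ k ih =>
    rw [sphMom, Finset.prod_range_succ, ← sphMom]
    have h1 : ((k + 1 + d).choose d : ℝ) * (k + 1) = (k + d).choose d * (k + 1 + d) := by
      have h := Nat.choose_mul_succ_eq (k + d) d
      have h2 : k + d + 1 - d = k + 1 := by omega
      rw [h2, show k + d + 1 = k + 1 + d by ring] at h
      exact_mod_cast h.symm
    have h3 : (k + (d + 1 : ℕ) : ℝ) ≠ 0 := by positivity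
    field_simp
    push_cast
    have h4 : ((k + 1 + d).choose d : ℝ) * sphMom (d + 1) k * (k + 1)
      = ((k + d).choose d * sphMom (d + 1) k) * (k + 1 + d) := by
      rw [mul_right_comm, h1]; ring
    rw [h4, ih]; ring

lemma sphMom_pos {n : ℕ} (hn : 1 ≤ n) (k : ℕ) : 0 < sphMom n k := by
  refine Finset.prod_pos fun j _ => ?_
  have : (0 : ℝ) < n := by exact_mod_cast hn
  positivity

lemma choose_rec (d k : ℕ) :
    ((k + (d + 1)).choose (d + 1) : ℝ) = (k + d).choose d * ((k + (d + 1)) / (d + 1)) := by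
  have h := Nat.add_one_mul_choose_eq (k + d) d
  have h' : (k + d + 1 : ℝ) * (k + d).choose d = (k + d + 1).choose (d + 1) * (d + 1) := by
    exact_mod_cast h
  rw [← add_assoc k d 1]
  field_simp
  linarith

lemma choose_double (d k : ℕ) : ((2 * k + d).choose d : ℝ) ≤ 2 ^ d * (k + d).choose d := by
  induction d with
  | zero => simp
  | succ d ih =>
    have h1 := choose_rec d (2 * k)
    push_cast at h1
    rw [h1, choose_rec d k, pow_succ]
    have : (2 * k + (d + 1) : ℝ) / (d + 1) ≤ 2 * ((k + (d + 1)) / (d + 1)) := by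
      rw [← mul_div_assoc]; gcongr; linarith
    calc ((2 * k + d).choose d : ℝ) * ((2 * k + (d + 1)) / (d + 1))
        ≤ (2 ^ d * (k + d).choose d) * (2 * ((k + (d + 1)) / (d + 1))) := by gcongr
      _ = _ := by ring

lemma choose_le_pow' (d k : ℕ) : ((k + d).choose d : ℝ) ≤ (k + 1) ^ d := by
  induction d with
  | zero => simp
  | succ d ih =>
    rw [choose_rec d k, pow_succ]
    have : (k + (d + 1) : ℝ) / (d + 1) ≤ k + 1 := by
      rw [div_le_iff₀ (by positivity)]
      have : (0 : ℝ) ≤ k * d := by positivity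
      nlinarith
    gcongr

lemma sphMom_double {n : ℕ} (hn : 1 ≤ n) (k : ℕ) :
    sphMom n k ≤ 2 ^ (n - 1) * sphMom n (2 * k) := by
  obtain ⟨d, rfl⟩ := Nat.exists_eq_add_of_le' hn
  have h1 := choose_mul_sphMom d k
  have h2 := choose_mul_sphMom d (2 * k)
  have p1 := sphMom_pos hn k
  have p2 := sphMom_pos hn (2 * k)
  have hd := choose_double d k
  rw [Nat.add_sub_cancel]
  calc sphMom (d + 1) k = sphMom (d + 1) k * ((2 * k + d).choose d * sphMom (d + 1) (2 * k)) := by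
        rw [h2, mul_one]
    _ ≤ sphMom (d + 1) k * (2 ^ d * (k + d).choose d * sphMom (d + 1) (2 * k)) := by gcongr
    _ = ((k + d).choose d * sphMom (d + 1) k) * (2 ^ d * sphMom (d + 1) (2 * k)) := by ring
    _ = _ := by rw [h1, one_mul]

lemma inv_sphMom_le {n : ℕ} (hn : 1 ≤ n) (k : ℕ) : (sphMom n k)⁻¹ ≤ (k + 1) ^ (n - 1) := by
  obtain ⟨d, rfl⟩ := Nat.exists_eq_add_of_le' hn
  rw [Nat.add_sub_cancel]
  refine le_trans (le_of_eq ?_) (choose_le_pow' d k)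
  exact (eq_inv_of_mul_eq_one_left (choose_mul_sphMom d k)).symm

/-! ### The weighted volume measure -/

lemma rotInv_nV (n : ℕ) : RotInv ((nV n).restrict (Bl n)) := by
  intro U
  let U' : En n ≃ₗᵢ[ℝ] En n :=
    { U.toLinearEquiv.restrictScalars ℝ with
      norm_map' := fun u => U.norm_map u }
  have h1 : MeasurePreserving U (nV n) (nV n) :=
    (LinearIsometryEquiv.measurePreserving U').smul_measure _
  have h2 := h1.restrict_preimage (s := Bl n) isOpen_ball.measurableSet
  have h3 : U ⁻¹' (Bl n) = Bl n := by
    ext u; simp [Bl]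
  rwa [h3] at h2

lemma lintegral_radial {n : ℕ} (hn : 1 ≤ n) {g : ℝ → ENNReal} (hg : Measurable g) :
    ∫⁻ u in Bl n, g ‖u‖ ∂(nV n)
      = (2 * n : ℕ) * ∫⁻ r in Set.Ioo 0 1, ENNReal.ofReal (r ^ (2 * n - 1)) * g r := by
  have : Nonempty (Fin n) := ⟨⟨0, hn⟩⟩
  have hdim : Module.finrank ℝ (En n) = 2 * n := by
    rw [← Module.finrank_mul_finrank ℝ ℂ (En n)]
    simp
  set μ : Measure (En n) := volume with hμ
  have hpol : ∀ g : ℝ → ENNReal, Measurable g → ∫⁻ u, g ‖u‖ ∂μ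
      = (2 * n : ℕ) * μ (ball 0 1) * ∫⁻ r in Set.Ioi 0, ENNReal.ofReal (r ^ (2 * n - 1)) * g r := by
    intro g hg
    have h0 : ∫⁻ u, g ‖u‖ ∂μ = ∫⁻ x : ({(0)}ᶜ : Set (En n)), g ‖x.1‖ ∂(μ.comap (↑)) := by
      rw [lintegral_subtype_comap (measurableSet_singleton _).compl (fun x : En n => g ‖x‖),
        restrict_compl_singleton]
    have h1 := μ.measurePreserving_homeomorphUnitSphereProd.lintegral_comp
      (f := fun y => g (y.2 : ℝ)) (by fun_prop)
    simp only [homeomorphUnitSphereProd_apply_snd_coe] at h1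
    rw [h0, h1, lintegral_prod _ (by fun_prop)]
    simp only [lintegral_const]
    rw [Measure.toSphere_apply_univ, hdim, mul_comm]
    congr 1
    rw [Measure.volumeIoiPow, lintegral_withDensity_eq_lintegral_mul _ (by fun_prop) (by fun_prop)]
    simp only [Pi.mul_apply]
    exact lintegral_subtype_comap measurableSet_Ioi
      (fun r : ℝ => ENNReal.ofReal (r ^ (2 * n - 1)) * g r)
  have hb0 : μ (ball 0 1) ≠ 0 := (measure_ball_pos μ _ one_pos).ne'
  have hb1 : μ (ball 0 1) ≠ ⊤ := measure_ball_lt_top.ne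
  have h2 : ∫⁻ u in Bl n, g ‖u‖ ∂μ = ∫⁻ u, (Set.Iio 1).indicator g ‖u‖ ∂μ := by
    rw [← lintegral_indicator (s := Bl n) isOpen_ball.measurableSet]
    refine lintegral_congr fun u => ?_
    by_cases h : ‖u‖ < 1
    · rw [Set.indicator_of_mem (by simpa [Bl] using h), Set.indicator_of_mem (by simpa using h)]
    · rw [Set.indicator_of_notMem (by simpa [Bl] using h),
        Set.indicator_of_notMem (by simpa using h)]
  rw [nV, Measure.restrict_smul, lintegral_smul_measure, h2,
    hpol _ (hg.indicator measurableSet_Iio), smul_eq_mul]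
  have h3 : ∫⁻ r in Set.Ioi 0, ENNReal.ofReal (r ^ (2 * n - 1)) * (Set.Iio 1).indicator g r
      = ∫⁻ r in Set.Ioo 0 1, ENNReal.ofReal (r ^ (2 * n - 1)) * g r := by
    rw [← Set.Ioi_inter_Iio, Set.inter_comm, ← Measure.restrict_restrict measurableSet_Iio,
      ← lintegral_indicator measurableSet_Iio]
    refine lintegral_congr fun r => ?_
    by_cases h : r ∈ Set.Iio (1 : ℝ)
    · rw [Set.indicator_of_mem h, Set.indicator_of_mem h]
    · rw [Set.indicator_of_notMem h, Set.indicator_of_notMem h, mul_zero]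
  rw [h3, mul_comm ((2 * n : ℕ) : ENNReal), mul_assoc, ← mul_assoc, ENNReal.inv_mul_cancel hb0 hb1,
    one_mul]

/-- The measure `ω dV` on the unit ball. -/
def wV (n : ℕ) (ω : ℝ → ℝ) : Measure (En n) :=
  ((nV n).restrict (Bl n)).withDensity fun u => ENNReal.ofReal (ω ‖u‖)

lemma ae_wV (n : ℕ) (ω : ℝ → ℝ) : ∀ᵐ u ∂(wV n ω), u ∈ Bl n :=
  (withDensity_absolutelyContinuous _ _).ae_le (ae_restrict_mem isOpen_ball.measurableSet)

lemma rotInv_wV (n : ℕ) {ω : ℝ → ℝ} (hω : IsWeight ω) : RotInv (wV n ω) := by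
  have := hω.2.1
  exact (rotInv_nV n).withDensity (g := fun r => ENNReal.ofReal (ω r)) (by fun_prop)

lemma lintegral_wV {n : ℕ} {ω : ℝ → ℝ} (hω : IsWeight ω) {g : En n → ENNReal} (hg : Measurable g) :
    ∫⁻ u, g u ∂(wV n ω) = ∫⁻ u in Bl n, ENNReal.ofReal (ω ‖u‖) * g u ∂(nV n) := by
  have := hω.2.1
  rw [wV, lintegral_withDensity_eq_lintegral_mul _ (by fun_prop) hg]
  rfl

lemma lintegral_wV_radial {n : ℕ} (hn : 1 ≤ n) {ω : ℝ → ℝ} (hω : IsWeight ω) {g : ℝ → ENNReal}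
    (hg : Measurable g) : ∫⁻ u, g ‖u‖ ∂(wV n ω) = (2 * n : ℕ) *
      ∫⁻ r in Set.Ioo 0 1, ENNReal.ofReal (r ^ (2 * n - 1)) * (ENNReal.ofReal (ω r) * g r) := by
  have := hω.2.1
  rw [lintegral_wV hω (by fun_prop)]
  exact lintegral_radial hn (g := fun r => ENNReal.ofReal (ω r) * g r) (by fun_prop)

lemma ofReal_wh {ω : ℝ → ℝ} (hω : IsWeight ω) {r : ℝ} (hr : 0 ≤ r) :
    ENNReal.ofReal (wh ω r) = ∫⁻ t in Set.Ioo r 1, ENNReal.ofReal (ω t) := by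
  have hsub : Set.Ioo r 1 ⊆ Set.Ico 0 1 := fun t ht => ⟨hr.trans ht.1.le, ht.2⟩
  rw [wh, ofReal_integral_eq_lintegral_ofReal (hω.2.2.mono_set hsub)]
  filter_upwards [ae_restrict_mem measurableSet_Ioo] with t ht
  exact hω.1 t (hsub ht)

lemma wh_anti {ω : ℝ → ℝ} (hω : IsWeight ω) {r s : ℝ} (hr : 0 ≤ r) (hrs : r ≤ s) :
    wh ω s ≤ wh ω r := by
  have hsub : Set.Ioo r 1 ⊆ Set.Ico 0 1 := fun t ht => ⟨hr.trans ht.1.le, ht.2⟩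
  refine setIntegral_mono_set (hω.2.2.mono_set hsub) ?_
    (Set.Ioo_subset_Ioo_left hrs).eventuallyLE
  filter_upwards [ae_restrict_mem measurableSet_Ioo] with t ht
  exact hω.1 t (hsub ht)

lemma wV_tail_le {n : ℕ} (hn : 1 ≤ n) {ω : ℝ → ℝ} (hω : IsWeight ω) {g : ℝ → ENNReal}
    (hg : Measurable g) (s : ℝ) :
    ∫⁻ u, (Set.Ioi s).indicator g ‖u‖ ∂(wV n ω)
      ≤ (2 * n : ℕ) * ∫⁻ r in Set.Ioo s 1, ENNReal.ofReal (ω r) * g r := by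
  rw [lintegral_wV_radial hn hω (hg.indicator measurableSet_Ioi)]
  refine mul_le_mul_right ?_ _
  rw [← lintegral_indicator measurableSet_Ioo, ← lintegral_indicator measurableSet_Ioo]
  refine lintegral_mono fun r => ?_
  by_cases h : r ∈ Set.Ioo (0 : ℝ) 1
  · rw [Set.indicator_of_mem h]
    by_cases h' : r ∈ Set.Ioi s
    · rw [Set.indicator_of_mem h', Set.indicator_of_mem (by exact ⟨h', h.2⟩)]
      refine mul_le_of_le_one_left' ?_
      rw [ENNReal.ofReal_le_one]
      exact pow_le_one₀ h.1.le h.2.le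
    · rw [Set.indicator_of_notMem h']; simp
  · rw [Set.indicator_of_notMem h]; simp

lemma wV_tail_ge {n : ℕ} (hn : 1 ≤ n) {ω : ℝ → ℝ} (hω : IsWeight ω) {s : ℝ} (hs : 1 / 2 ≤ s) :
    ENNReal.ofReal ((1 / 2) ^ (2 * n - 1) * wh ω s) ≤ wV n ω {u | s < ‖u‖} := by
  have h1 : wV n ω {u | s < ‖u‖} = ∫⁻ u, (Set.Ioi s).indicator 1 ‖u‖ ∂(wV n ω) := by
    rw [← lintegral_indicator_one (measurableSet_lt measurable_const measurable_norm)]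
    rfl
  rw [h1, lintegral_wV_radial hn hω (measurable_one.indicator measurableSet_Ioi),
    ENNReal.ofReal_mul (by positivity), ofReal_wh hω (by linarith),
    ← lintegral_const_mul' _ _ ENNReal.ofReal_ne_top]
  refine le_trans ?_ (le_mul_of_one_le_left' (by norm_cast; omega))
  rw [← lintegral_indicator measurableSet_Ioo, ← lintegral_indicator measurableSet_Ioo]
  refine lintegral_mono fun r => ?_
  by_cases h : r ∈ Set.Ioo s 1
  · have h0 : 0 < r := by linarith [h.1]
    rw [Set.indicator_of_mem h, Set.indicator_of_mem (by exact ⟨h0, h.2⟩),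
      Set.indicator_of_mem (by exact h.1)]
    simp only [Pi.one_apply, mul_one]
    gcongr
    linarith [h.1]
  · rw [Set.indicator_of_notMem h]; simp

lemma isFinite_wV {n : ℕ} (hn : 1 ≤ n) {ω : ℝ → ℝ} (hω : IsWeight ω) : IsFiniteMeasure (wV n ω) := by
  constructor
  have h1 := lintegral_wV_radial (n := n) hn hω (g := 1) measurable_one
  simp only [Pi.one_apply, lintegral_one, mul_one] at h1
  rw [h1]
  refine ENNReal.mul_lt_top (ENNReal.natCast_lt_top _) ?_
  have h2 : ∫⁻ r in Set.Ioo 0 1, ENNReal.ofReal (ω r) < ⊤ := by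
    rw [← ofReal_wh hω le_rfl]; simp
  refine lt_of_le_of_lt (setLIntegral_mono' measurableSet_Ioo fun r hr => ?_) h2
  refine mul_le_of_le_one_left' ?_
  rw [ENNReal.ofReal_le_one]
  exact pow_le_one₀ hr.1.le hr.2.le

/-- The tails of `ω dV` are comparable with `ω̂`. -/
lemma wV_tail {n : ℕ} (hn : 1 ≤ n) {ω : ℝ → ℝ} (hω : IsWeight ω) (hD : DHat ω) :
    ∃ c > 0, ∀ s ∈ Set.Ico (0 : ℝ) 1, c * wh ω s ≤ (wV n ω).real {u | s < ‖u‖} ∧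
      (wV n ω).real {u | s < ‖u‖} ≤ 2 * n * wh ω s := by
  have := isFinite_wV hn hω
  obtain ⟨C, hC, hDC⟩ := hD
  have hwn : ∀ s ∈ Set.Ico (0 : ℝ) 1, 0 ≤ wh ω s := fun s hs =>
    setIntegral_nonneg measurableSet_Ioo fun t ht => hω.1 t ⟨hs.1.trans ht.1.le, ht.2⟩
  have hge : ∀ s ∈ Set.Ico (1 / 2 : ℝ) 1,
      (1 / 2) ^ (2 * n - 1) * wh ω s ≤ (wV n ω).real {u | s < ‖u‖} := fun s hs => by
    rw [measureReal_def]
    exact (ENNReal.ofReal_le_iff_le_toReal (measure_ne_top _ _)).1 (wV_tail_ge hn hω hs.1)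
  refine ⟨(1 / 2) ^ (2 * n - 1) / C, by positivity, fun s hs => ⟨?_, ?_⟩⟩
  · rcases le_or_gt (1 / 2) s with h | h
    · refine le_trans ?_ (hge s ⟨h, hs.2⟩)
      have := hwn s hs
      gcongr
      exact div_le_self (by positivity) hC
    · have h1 := hge (1 / 2) ⟨le_rfl, by norm_num⟩
      have h2 : (wV n ω).real {u | 1 / 2 < ‖u‖} ≤ (wV n ω).real {u | s < ‖u‖} :=
        measureReal_mono fun u hu => h.trans hu
      have h3 := hDC 0 ⟨le_rfl, one_pos⟩
      have h4 := wh_anti hω le_rfl hs.1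
      rw [add_zero] at h3
      refine le_trans ?_ (h1.trans h2)
      rw [div_mul_eq_mul_div, div_le_iff₀ (by positivity), mul_assoc]
      gcongr
      linarith
  · have h1 : wV n ω {u | s < ‖u‖} = ∫⁻ u, (Set.Ioi s).indicator 1 ‖u‖ ∂(wV n ω) := by
      rw [← lintegral_indicator_one (measurableSet_lt measurable_const measurable_norm)]
      rfl
    have h2 := wV_tail_le (n := n) hn hω (g := 1) measurable_one s
    simp only [Pi.one_apply, mul_one] at h2
    rw [← h1, ← ofReal_wh hω hs.1] at h2
    rw [measureReal_def]
    refine ENNReal.toReal_le_of_le_ofReal (by have := hwn s hs; positivity) (h2.trans_eq ?_)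
    rw [ENNReal.ofReal_mul (by positivity)]
    congr 1
    norm_cast

/-- `V_i = ω̂(1 - 2^{-i})`. -/
def dyV (ω : ℝ → ℝ) (i : ℕ) : ℝ := wh ω (1 - (1 / 2) ^ i)

lemma dy_mem (i : ℕ) : (1 - (1 / 2) ^ i : ℝ) ∈ Set.Ico (0 : ℝ) 1 := by
  have h1 : ((1 : ℝ) / 2) ^ i ≤ 1 := pow_le_one₀ (by norm_num) (by norm_num)
  have h2 : (0 : ℝ) < (1 / 2) ^ i := by positivity
  exact ⟨by linarith, by linarith⟩

lemma dyV_anti {ω : ℝ → ℝ} (hω : IsWeight ω) {i j : ℕ} (h : i ≤ j) : dyV ω j ≤ dyV ω i := by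
  refine wh_anti hω (dy_mem i).1 ?_
  have : ((1 : ℝ) / 2) ^ j ≤ (1 / 2) ^ i := pow_le_pow_of_le_one (by norm_num) (by norm_num) h
  linarith

lemma dyV_doubling {ω : ℝ → ℝ} {C : ℝ}
    (hDC : ∀ r ∈ Set.Ico (0:ℝ) 1, wh ω r ≤ C * wh ω ((1 + r) / 2)) (i : ℕ) :
    dyV ω i ≤ C * dyV ω (i + 1) := by
  have := hDC _ (dy_mem i)
  rwa [show (1 + (1 - (1 / 2) ^ i)) / 2 = (1 - (1 / 2) ^ (i + 1) : ℝ) by ring] at this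

lemma quarter_le (i : ℕ) : (1 / 4 : ℝ) ≤ (1 - (1 / 2) ^ (i + 1)) ^ (2 ^ (i + 1)) := by
  induction i with
  | zero => norm_num
  | succ i ih =>
    refine ih.trans ?_
    rw [pow_succ 2 (i + 1), mul_comm (2 ^ (i + 1)), pow_mul]
    refine pow_le_pow_left₀ (dy_mem _).1 ?_ _
    rw [pow_succ (1 / 2 : ℝ) (i + 1)]
    nlinarith [sq_nonneg ((1 / 2 : ℝ) ^ (i + 1))]

lemma radMom_ge {n : ℕ} (hn : 1 ≤ n) {ω : ℝ → ℝ} (hω : IsWeight ω) (hD : DHat ω) :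
    ∃ c > 0, ∀ i : ℕ, c * dyV ω i ≤ ∫ u, ‖u‖ ^ (2 * 2 ^ i) ∂(wV n ω) := by
  have := isFinite_wV hn hω
  obtain ⟨c, hc, hcs⟩ := wV_tail hn hω hD
  obtain ⟨C, hC, hDC⟩ := hD
  refine ⟨c / (4 * C), by positivity, fun i => ?_⟩
  set s : ℝ := 1 - (1 / 2) ^ (i + 1) with hs
  have hs0 := dy_mem (i + 1)
  have h1 := mul_meas_ge_le_integral_of_nonneg (μ := wV n ω)
    (f := fun u : En n => ‖u‖ ^ (2 * 2 ^ i)) (Eventually.of_forall fun u => by positivity)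
    (integrable_of_continuous (ae_wV n ω) (by fun_prop)) (s ^ (2 * 2 ^ i))
  refine le_trans ?_ h1
  have h2 : (wV n ω).real {u | s < ‖u‖} ≤
      (wV n ω).real {u | s ^ (2 * 2 ^ i) ≤ ‖u‖ ^ (2 * 2 ^ i)} :=
    measureReal_mono fun u hu => pow_le_pow_left₀ hs0.1 (le_of_lt hu) _
  have h3 := (hcs s hs0).1
  have h4 := dyV_doubling hDC i
  have h5 : (1 / 4 : ℝ) ≤ s ^ (2 * 2 ^ i) := by
    have := quarter_le i
    rwa [pow_succ' 2 i] at this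
  calc c / (4 * C) * dyV ω i ≤ c / (4 * C) * (C * dyV ω (i + 1)) := by gcongr
    _ = 1 / 4 * (c * dyV ω (i + 1)) := by field_simp
    _ ≤ s ^ (2 * 2 ^ i) * (wV n ω).real {u | s < ‖u‖} := by
        refine mul_le_mul h5 h3 ?_ (by linarith)
        refine mul_nonneg hc.le ?_
        exact setIntegral_nonneg measurableSet_Ioo fun t ht => hω.1 t ⟨hs0.1.trans ht.1.le, ht.2⟩
    _ ≤ _ := by gcongr

lemma radMom_anti {n : ℕ} (hn : 1 ≤ n) {ω : ℝ → ℝ} (hω : IsWeight ω) {j k : ℕ} (h : j ≤ k) :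
    ∫ u, ‖u‖ ^ (2 * k) ∂(wV n ω) ≤ ∫ u, ‖u‖ ^ (2 * j) ∂(wV n ω) := by
  have := isFinite_wV hn hω
  refine integral_mono_ae (integrable_of_continuous (ae_wV n ω) (by fun_prop))
    (integrable_of_continuous (ae_wV n ω) (by fun_prop)) ?_
  filter_upwards [ae_wV n ω] with u hu
  have hu' : ‖u‖ < 1 := by simpa [Bl] using hu
  exact pow_le_pow_of_le_one (norm_nonneg _) hu'.le (by omega)

lemma radMom_pos {n : ℕ} (hn : 1 ≤ n) {ω : ℝ → ℝ} (hω : IsWeight ω) (hD : DHat ω)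
    (hpos : ∀ r ∈ Set.Ico (0:ℝ) 1, 0 < wh ω r) (k : ℕ) : 0 < ∫ u, ‖u‖ ^ (2 * k) ∂(wV n ω) := by
  obtain ⟨c, hc, h⟩ := radMom_ge hn hω hD
  refine lt_of_lt_of_le ?_ ((h k).trans (radMom_anti hn hω Nat.lt_two_pow_self.le))
  exact mul_pos hc (hpos _ (dy_mem k))

lemma radMom_double {n : ℕ} (hn : 1 ≤ n) {ω : ℝ → ℝ} (hω : IsWeight ω) (hD : DHat ω) :
    ∃ D > 0, ∀ k : ℕ, ∫ u, ‖u‖ ^ (2 * k) ∂(wV n ω) ≤ D * ∫ u, ‖u‖ ^ (2 * (2 * k)) ∂(wV n ω) := by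
  have := isFinite_wV hn hω
  obtain ⟨c, hc, hcs⟩ := wV_tail hn hω hD
  obtain ⟨C, hC, hDC⟩ := hD
  have hn0 : (0 : ℝ) < n := by exact_mod_cast hn
  set D : ℝ := max 1 (2 * n * C / c) with hDdef
  have hD1 : 1 ≤ D := le_max_left _ _
  refine ⟨D, by positivity, fun k => ?_⟩
  rcases Nat.eq_zero_or_pos k with rfl | hk
  · simp only [mul_zero]
    refine le_mul_of_one_le_left (integral_nonneg fun u => by positivity) hD1
  have hlc : ∀ j : ℕ, ∫ u, ‖u‖ ^ j ∂(wV n ω)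
      = ∫ t in Set.Ioi 0, (wV n ω).real {u | t < ‖u‖ ^ j} := fun j =>
    (integrable_of_continuous (ae_wV n ω) (by fun_prop)).integral_eq_integral_meas_lt
      (Eventually.of_forall fun u => by positivity)
  have hz : ∀ (j : ℕ) (t : ℝ), 1 ≤ t → (wV n ω).real {u | t < ‖u‖ ^ j} = 0 := by
    intro j t h1
    rw [measureReal_def, (measure_eq_zero_iff_ae_notMem).2, ENNReal.toReal_zero]
    filter_upwards [ae_wV n ω] with u hu
    have hu' : ‖u‖ < 1 := by simpa [Bl] using hu
    have := pow_le_one₀ (norm_nonneg u) hu'.le (n := j)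
    exact not_lt.2 (this.trans h1)
  have hInt : ∀ j : ℕ, IntegrableOn (fun t : ℝ => (wV n ω).real {u | t < ‖u‖ ^ j}) (Set.Ioi 0) := by
    intro j
    have hanti : Antitone fun t : ℝ => (wV n ω).real {u | t < ‖u‖ ^ j} := fun s t hst =>
      measureReal_mono fun u hu => lt_of_le_of_lt hst hu
    have hb : IntegrableOn ((Set.Ioc (0 : ℝ) 1).indicator fun _ => (wV n ω).real Set.univ)
        (Set.Ioi 0) :=
      ((integrableOn_const (by simp)).integrable_indicator measurableSet_Ioc).integrableOn
    refine Integrable.mono' hb hanti.measurable.aestronglyMeasurable ?_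
    filter_upwards [ae_restrict_mem measurableSet_Ioi] with t ht
    rw [Real.norm_of_nonneg measureReal_nonneg]
    by_cases h : t ≤ 1
    · rw [Set.indicator_of_mem (by exact ⟨ht, h⟩)]
      exact measureReal_mono (Set.subset_univ _)
    · rw [hz j t (le_of_not_ge h), Set.indicator_of_notMem (fun h' => h h'.2)]
  rw [hlc, hlc, ← integral_const_mul]
  refine setIntegral_mono_on (hInt _) ((hInt _).const_mul _) measurableSet_Ioi fun t ht => ?_
  have ht0 : (0 : ℝ) < t := ht
  rcases lt_or_ge t 1 with h1 | h1
  · have hk2 : ((2 * k : ℕ) : ℝ) ≠ 0 := by positivity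
    set r : ℝ := t ^ (((2 * k : ℕ) : ℝ)⁻¹) with hr
    have hrt : r ^ (2 * k) = t := Real.rpow_inv_natCast_pow ht0.le (by omega)
    have hr0 : 0 ≤ r := Real.rpow_nonneg ht0.le _
    have hr1 : r < 1 := Real.rpow_lt_one ht0.le h1 (by positivity)
    have e1 : (wV n ω).real {u | t < ‖u‖ ^ (2 * k)} ≤ (wV n ω).real {u | r < ‖u‖} := by
      refine measureReal_mono fun u hu => ?_
      have hu' : t < ‖u‖ ^ (2 * k) := hu
      rw [← hrt] at hu'
      exact lt_of_pow_lt_pow_left₀ _ (norm_nonneg _) hu'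
    have e2 : (wV n ω).real {u | (1 + r) / 2 < ‖u‖} ≤
        (wV n ω).real {u | t < ‖u‖ ^ (2 * (2 * k))} := by
      refine measureReal_mono fun u hu => ?_
      have hu' : (1 + r) / 2 < ‖u‖ := hu
      change t < ‖u‖ ^ (2 * (2 * k))
      rw [← hrt, pow_mul ‖u‖ 2]
      refine pow_lt_pow_left₀ ?_ hr0 (by omega)
      nlinarith [sq_nonneg (1 - r)]
    have e3 := (hcs r ⟨hr0, hr1⟩).2
    have e4 := (hcs ((1 + r) / 2) ⟨by linarith, by linarith⟩).1
    have e5 := hDC r ⟨hr0, hr1⟩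
    calc (wV n ω).real {u | t < ‖u‖ ^ (2 * k)} ≤ 2 * n * wh ω r := e1.trans e3
      _ ≤ 2 * n * (C * wh ω ((1 + r) / 2)) := by gcongr
      _ = 2 * n * C / c * (c * wh ω ((1 + r) / 2)) := by field_simp
      _ ≤ 2 * n * C / c * (wV n ω).real {u | t < ‖u‖ ^ (2 * (2 * k))} := by
          gcongr; exact e4.trans e2
      _ ≤ _ := by gcongr; exact le_max_right _ _
  · rw [hz _ t h1]; positivity

/-! ### The reproducing kernel -/

/-- The moments `∫ |⟨e,u⟩|^{2k} ω dV` for a unit vector `e`. -/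
def kerMom (n : ℕ) (ω : ℝ → ℝ) (k : ℕ) : ℝ := sphMom n k * ∫ u, ‖u‖ ^ (2 * k) ∂(wV n ω)

/-- The one-variable function `F` such that `B_z(u) = F(⟨z,u⟩)`. -/
def kerF (n : ℕ) (ω : ℝ → ℝ) (w : ℂ) : ℂ := ∑' k, (((kerMom n ω k)⁻¹ : ℝ) : ℂ) * w ^ k

lemma kerMom_eq {n : ℕ} (hn : 1 ≤ n) {ω : ℝ → ℝ} (hω : IsWeight ω) {e : En n} (he : ‖e‖ = 1)
    (k : ℕ) : ∫ u, ‖(inner ℂ e u : ℂ)‖ ^ (2 * k) ∂(wV n ω) = kerMom n ω k := by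
  have := isFinite_wV hn hω
  exact moment_eq hn he k (rotInv_wV n hω) (ae_wV n ω)

lemma kerMom_pos {n : ℕ} (hn : 1 ≤ n) {ω : ℝ → ℝ} (hω : IsWeight ω) (hD : DHat ω)
    (hpos : ∀ r ∈ Set.Ico (0:ℝ) 1, 0 < wh ω r) (k : ℕ) : 0 < kerMom n ω k :=
  mul_pos (sphMom_pos hn k) (radMom_pos hn hω hD hpos k)

lemma exists_unit {n : ℕ} (hn : 1 ≤ n) : ∃ e : En n, ‖e‖ = 1 :=
  ⟨EuclideanSpace.single ⟨0, hn⟩ 1, by simp⟩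

lemma kerMom_cmd {n : ℕ} (hn : 1 ≤ n) {ω : ℝ → ℝ} (hω : IsWeight ω) (j k : ℕ) :
    0 ≤ cmd (kerMom n ω) j k := by
  have := isFinite_wV hn hω
  obtain ⟨e, he⟩ := exists_unit hn
  have h : ∀ j k, cmd (kerMom n ω) j k = ∫ u, (‖(inner ℂ e u : ℂ)‖ ^ 2) ^ k *
      (1 - ‖(inner ℂ e u : ℂ)‖ ^ 2) ^ j ∂(wV n ω) := by
    intro j
    induction j with
    | zero =>
      intro k
      simp only [cmd, pow_zero, mul_one, ← pow_mul]
      exact (kerMom_eq hn hω he k).symm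
    | succ j ih =>
      intro k
      simp only [cmd]
      rw [ih, ih, ← integral_sub (integrable_of_continuous (ae_wV n ω) (by fun_prop))
        (integrable_of_continuous (ae_wV n ω) (by fun_prop))]
      refine integral_congr_ae (Eventually.of_forall fun u => ?_)
      simp only
      ring
  rw [h]
  refine integral_nonneg_of_ae ?_
  filter_upwards [ae_wV n ω] with u hu
  have h1 := norm_inner_lt he.le hu
  have h2 : ‖(inner ℂ e u : ℂ)‖ ^ 2 ≤ 1 := pow_le_one₀ (norm_nonneg _) h1.le
  have h3 : 0 ≤ 1 - ‖(inner ℂ e u : ℂ)‖ ^ 2 := by linarith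
  exact mul_nonneg (by positivity) (pow_nonneg h3 _)

lemma kerMom_double {n : ℕ} (hn : 1 ≤ n) {ω : ℝ → ℝ} (hω : IsWeight ω) (hD : DHat ω)
    (hpos : ∀ r ∈ Set.Ico (0:ℝ) 1, 0 < wh ω r) :
    ∃ D : ℝ, 0 ≤ D ∧ ∀ k, kerMom n ω k ≤ D * kerMom n ω (2 * k + 1) := by
  obtain ⟨D, hD0, hDk⟩ := radMom_double hn hω hD
  have hp := kerMom_pos hn hω hD hpos
  have hanti : Antitone (kerMom n ω) := cmd_anti (kerMom_cmd hn hω) 0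
  have h2 : ∀ k, kerMom n ω k ≤ 2 ^ (n - 1) * D * kerMom n ω (2 * k) := by
    intro k
    calc kerMom n ω k ≤ (2 ^ (n - 1) * sphMom n (2 * k)) *
          (D * ∫ u, ‖u‖ ^ (2 * (2 * k)) ∂(wV n ω)) :=
        mul_le_mul (sphMom_double hn k) (hDk k) (radMom_pos hn hω hD hpos k).le
          (by have := sphMom_pos hn (2 * k); positivity)
      _ = _ := by rw [kerMom]; ring
  set E : ℝ := 2 ^ (n - 1) * D with hE
  have hE0 : 0 < E := by positivity
  refine ⟨E * E + kerMom n ω 0 / kerMom n ω 1, ?_, fun k => ?_⟩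
  · have := hp 0
    have := hp 1
    positivity
  rw [add_mul]
  rcases Nat.eq_zero_or_pos k with rfl | hk
  · simp only [mul_zero, zero_add]
    rw [div_mul_cancel₀ _ (hp 1).ne']
    have := hp 1
    have : 0 ≤ E * E * kerMom n ω 1 := by positivity
    linarith
  · have h3 : kerMom n ω k ≤ E * E * kerMom n ω (2 * k + 1) :=
      calc kerMom n ω k ≤ E * kerMom n ω (2 * k) := h2 k
        _ ≤ E * (E * kerMom n ω (2 * (2 * k))) := by gcongr; exact h2 _
        _ ≤ E * (E * kerMom n ω (2 * k + 1)) := by gcongr; exact hanti (by omega)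
        _ = _ := by ring
    have h4 : 0 ≤ kerMom n ω 0 / kerMom n ω 1 * kerMom n ω (2 * k + 1) := by
      have := hp 0
      have := hp 1
      have := hp (2 * k + 1)
      positivity
    linarith

/-- The size of the kernel on the dyadic regions `|1 - w| ≥ 2^{-i}`. -/
lemma kerF_bound {n : ℕ} (hn : 1 ≤ n) {ω : ℝ → ℝ} (hω : IsWeight ω) (hD : DHat ω)
    (hpos : ∀ r ∈ Set.Ico (0:ℝ) 1, 0 < wh ω r) :
    ∃ C : ℝ, 0 < C ∧ ∀ w : ℂ, ‖w‖ < 1 →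
      (Summable fun k => (((kerMom n ω k)⁻¹ : ℝ) : ℂ) * w ^ k) ∧
      ∀ i : ℕ, (1 / 2) ^ i ≤ ‖1 - w‖ → ‖kerF n ω w‖ ≤ C * ((2 ^ i) ^ n / dyV ω i) := by
  obtain ⟨D, hD0, hDk⟩ := kerMom_double hn hω hD hpos
  obtain ⟨C, hC, hCw⟩ := kernel_bound (kerMom_cmd hn hω) hD0 hDk (kerMom_pos hn hω hD hpos)
  obtain ⟨c, hc, hci⟩ := radMom_ge hn hω hD
  refine ⟨C * (2 ^ (n - 1) / c), by positivity, fun w hw => ⟨(hCw w hw).1, fun i hi => ?_⟩⟩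
  have h1 := (hCw w hw).2 (2 ^ i) Nat.one_le_two_pow (by
    have h2 : (1 : ℝ) = (1 / 2) ^ i * 2 ^ i := by rw [← mul_pow]; norm_num
    push_cast
    calc (1 : ℝ) = (1 / 2) ^ i * 2 ^ i := h2
      _ ≤ _ := by gcongr)
  refine h1.trans ?_
  rw [mul_assoc]
  refine mul_le_mul_of_nonneg_left ?_ hC.le
  have hV : 0 < dyV ω i := hpos _ (dy_mem i)
  have h3 : (sphMom n (2 ^ i))⁻¹ ≤ 2 ^ (n - 1) * (2 ^ i) ^ (n - 1) := by
    refine (inv_sphMom_le hn _).trans ?_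
    rw [← mul_pow]
    refine pow_le_pow_left₀ (by positivity) ?_ _
    push_cast
    have : (1 : ℝ) ≤ 2 ^ i := one_le_pow₀ (by norm_num)
    linarith
  have h4 : (∫ u, ‖u‖ ^ (2 * 2 ^ i) ∂(wV n ω))⁻¹ ≤ (c * dyV ω i)⁻¹ :=
    inv_anti₀ (by positivity) (hci i)
  rw [kerMom, mul_inv]
  push_cast
  have h5 : 0 ≤ (∫ u, ‖u‖ ^ (2 * 2 ^ i) ∂(wV n ω))⁻¹ :=
    inv_nonneg.2 (integral_nonneg fun u => by positivity)
  calc (2 : ℝ) ^ i * ((sphMom n (2 ^ i))⁻¹ * (∫ u, ‖u‖ ^ (2 * 2 ^ i) ∂(wV n ω))⁻¹)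
      ≤ 2 ^ i * ((2 ^ (n - 1) * (2 ^ i) ^ (n - 1)) * (c * dyV ω i)⁻¹) := by gcongr
    _ = 2 ^ (n - 1) / c * ((2 ^ i) ^ (n - 1) * 2 ^ i / dyV ω i) := by field_simp
    _ = _ := by rw [← pow_succ, Nat.sub_add_cancel hn]

lemma kerF_differentiableOn {n : ℕ} {ω : ℝ → ℝ}
    (hs : ∀ w : ℂ, ‖w‖ < 1 → Summable fun k => (((kerMom n ω k)⁻¹ : ℝ) : ℂ) * w ^ k) :
    DifferentiableOn ℂ (kerF n ω) (ball 0 1) := by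
  intro w hw
  have hw' : ‖w‖ < 1 := by simpa using hw
  obtain ⟨r, hwr, hr1⟩ := exists_between hw'
  have hr0 : 0 ≤ r := (norm_nonneg w).trans hwr.le
  have h1 : Summable fun k => ‖(((kerMom n ω k)⁻¹ : ℝ) : ℂ) * (r : ℂ) ^ k‖ :=
    (hs r (by simpa [abs_of_nonneg hr0] using hr1)).norm
  have h2 := Complex.differentiableOn_tsum_of_summable_norm h1
    (F := fun k (w : ℂ) => (((kerMom n ω k)⁻¹ : ℝ) : ℂ) * w ^ k) (U := ball 0 r)
    (fun k => by fun_prop) isOpen_ball (fun k v hv => by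
      have hv' : ‖v‖ < r := by simpa using hv
      rw [norm_mul, norm_mul, norm_pow, norm_pow, Complex.norm_real r, Real.norm_of_nonneg hr0]
      gcongr)
  have h3 : DifferentiableAt ℂ (kerF n ω) w :=
    h2.differentiableAt (isOpen_ball.mem_nhds (by simpa using hwr))
  exact h3.differentiableWithinAt

lemma kerF_conj (n : ℕ) (ω : ℝ → ℝ) (w : ℂ) :
    kerF n ω ((starRingEnd ℂ) w) = (starRingEnd ℂ) (kerF n ω w) := by
  rw [kerF, kerF, Complex.conj_tsum]
  simp

lemma integral_wV {n : ℕ} {ω : ℝ → ℝ} (hω : IsWeight ω) (g : En n → ℂ) :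
    ∫ u, g u ∂(wV n ω) = ∫ u in Bl n, g u * (ω ‖u‖ : ℂ) ∂(nV n) := by
  have := hω.2.1
  rw [wV, integral_withDensity_eq_integral_toReal_smul (by fun_prop) (by simp)]
  refine setIntegral_congr_fun isOpen_ball.measurableSet fun u hu => ?_
  have hu' : ‖u‖ < 1 := by simpa [Bl] using hu
  rw [ENNReal.toReal_ofReal (hω.1 _ ⟨norm_nonneg _, hu'⟩), Complex.real_smul, mul_comm]

lemma integrable_wV_iff {n : ℕ} {ω : ℝ → ℝ} (hω : IsWeight ω) (g : En n → ℝ) :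
    Integrable g (wV n ω) ↔ IntegrableOn (fun u => g u * ω ‖u‖) (Bl n) (nV n) := by
  have := hω.2.1
  rw [wV, integrable_withDensity_iff (by fun_prop) (by simp)]
  refine integrableOn_congr_fun (fun u hu => ?_) isOpen_ball.measurableSet
  have hu' : ‖u‖ < 1 := by simpa [Bl] using hu
  rw [ENNReal.toReal_ofReal (hω.1 _ ⟨norm_nonneg _, hu'⟩)]

lemma aesm_wV {n : ℕ} {ω : ℝ → ℝ} {f : En n → ℂ} (hf : ContinuousOn f (Bl n)) :
    AEStronglyMeasurable f (wV n ω) :=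
  (hf.aestronglyMeasurable isOpen_ball.measurableSet).mono_ac
    (withDensity_absolutelyContinuous _ _)

lemma InAp.integrable {n : ℕ} (hn : 1 ≤ n) {ω : ℝ → ℝ} (hω : IsWeight ω) {f : En n → ℂ}
    (hf : InAp n 2 ω f) : Integrable f (wV n ω) := by
  have := isFinite_wV hn hω
  have h2 := (integrable_wV_iff hω _).2 hf.2
  refine Integrable.mono' ((integrable_const (1 : ℝ)).add h2) (aesm_wV hf.1.continuousOn)
    (Eventually.of_forall fun u => ?_)
  simp only [Pi.add_apply]
  rw [Real.rpow_two]
  nlinarith [sq_nonneg (‖f u‖ - 1), norm_nonneg (f u)]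

lemma inner_real_smul {n : ℕ} (ρ : ℝ) (e u : En n) :
    (inner ℂ ((ρ : ℂ) • e) u : ℂ) = ρ * inner ℂ e u := by
  rw [inner_smul_left, Complex.conj_ofReal]

lemma exists_polar {n : ℕ} (hn : 1 ≤ n) (z : En n) : ∃ e : En n, ‖e‖ = 1 ∧ z = (‖z‖ : ℂ) • e := by
  rcases eq_or_ne z 0 with rfl | hz
  · obtain ⟨e, he⟩ := exists_unit hn
    exact ⟨e, he, by simp⟩
  · have hz' : (‖z‖ : ℂ) ≠ 0 := by simpa using hz
    refine ⟨(‖z‖ : ℂ)⁻¹ • z, ?_, ?_⟩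
    · rw [norm_smul]; simp [hz]
    · rw [smul_smul, mul_inv_cancel₀ hz', one_smul]

/-- `F(⟨z,·⟩)` has the reproducing property. -/
lemma kerF_repro {n : ℕ} (hn : 1 ≤ n) {ω : ℝ → ℝ} (hω : IsWeight ω) (hD : DHat ω)
    (hpos : ∀ r ∈ Set.Ico (0:ℝ) 1, 0 < wh ω r) {f : En n → ℂ} (hf : InAp n 2 ω f) {z : En n}
    (hz : z ∈ Bl n) :
    f z = ∫ u, f u * (starRingEnd ℂ) (kerF n ω (inner ℂ z u)) ∂(wV n ω) := by
  have := isFinite_wV hn hω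
  obtain ⟨C, -, hC⟩ := kerF_bound hn hω hD hpos
  obtain ⟨e, he, hze⟩ := exists_polar hn z
  have hρ1 : ‖z‖ < 1 := by simpa [Bl] using hz
  set ρ : ℝ := ‖z‖ with hρ
  have hρ0 : 0 ≤ ρ := norm_nonneg z
  have hfi := hf.integrable hn hω
  -- Taylor coefficients of `f` along the complex line through `e`
  have hmaps : Set.MapsTo (fun s : ℂ => s • e) (ball 0 1) (Bl n) := fun s hs => by
    simpa [Bl, norm_smul, he] using hs
  have hdf : DifferentiableOn ℂ (fun s : ℂ => f (s • e)) (ball 0 1) :=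
    hf.1.comp (by fun_prop) hmaps
  set b : ℕ → ℂ := fun k => (k.factorial : ℂ)⁻¹ * iteratedDeriv k (fun s : ℂ => f (s • e)) 0 with hb
  have hbs : ∀ s : ℂ, ‖s‖ < 1 → HasSum (fun j => b j * s ^ j) (f (s • e)) := by
    intro s hs
    have := Complex.hasSum_taylorSeries_on_ball hdf (z := s) (by simpa using hs)
    refine this.congr_fun fun k => ?_
    rw [hb, sub_zero, smul_eq_mul, smul_eq_mul]
    ring
  set G : ℕ → En n → ℂ := fun k u => ((((kerMom n ω k)⁻¹ : ℝ) : ℂ) * (ρ : ℂ) ^ k) *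
    (f u * (starRingEnd ℂ) (inner ℂ e u) ^ k) with hG
  have hGb : ∀ᵐ u ∂(wV n ω), ∀ k, ‖f u * (starRingEnd ℂ) (inner ℂ e u) ^ k‖ ≤ ‖f u‖ := by
    filter_upwards [ae_wV n ω] with u hu k
    rw [norm_mul, norm_pow, RCLike.norm_conj]
    exact mul_le_of_le_one_right (norm_nonneg _)
      (pow_le_one₀ (norm_nonneg _) (norm_inner_lt he.le hu).le)
  have hfk : ∀ k, Integrable (fun u => f u * (starRingEnd ℂ) (inner ℂ e u) ^ k) (wV n ω) := by
    intro k
    refine hfi.mono (hfi.aestronglyMeasurable.mul (Continuous.aestronglyMeasurable (by fun_prop))) ?_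
    filter_upwards [hGb] with u hu using hu k
  have hGi : ∀ k, Integrable (G k) (wV n ω) := fun k => (hfk k).const_mul _
  have hρs : Summable fun k => ‖(((kerMom n ω k)⁻¹ : ℝ) : ℂ) * (ρ : ℂ) ^ k‖ :=
    (hC ρ (by simpa [abs_of_nonneg hρ0] using hρ1)).1.norm
  have hsum : Summable fun k => ∫ u, ‖G k u‖ ∂(wV n ω) := by
    refine Summable.of_nonneg_of_le (fun k => integral_nonneg fun u => norm_nonneg _) (fun k => ?_)
      (hρs.mul_right (∫ u, ‖f u‖ ∂(wV n ω)))
    simp only [hG]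
    rw [← integral_const_mul]
    refine integral_mono_ae (hGi k).norm (hfi.norm.const_mul _) ?_
    filter_upwards [hGb] with u hu
    rw [norm_mul _ (f u * _)]
    exact mul_le_mul_of_nonneg_left (hu k) (norm_nonneg _)
  have h1 := hasSum_integral_of_summable_integral_norm hGi hsum
  have h2 : ∀ k, ∫ u, G k u ∂(wV n ω) = b k * (ρ : ℂ) ^ k := by
    intro k
    simp only [hG]
    rw [integral_const_mul, integral_slice (rotInv_wV n hω) (ae_wV n ω) he hf.1 k (hfk k) hbs,
      kerMom_eq hn hω he]
    have : ((kerMom n ω k : ℝ) : ℂ) ≠ 0 := by exact_mod_cast (kerMom_pos hn hω hD hpos k).ne'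
    push_cast
    field_simp
  simp_rw [h2] at h1
  have h3 := h1.unique (hbs ρ (by simpa [abs_of_nonneg hρ0] using hρ1))
  rw [hze, ← h3]
  refine integral_congr_ae (Eventually.of_forall fun u => ?_)
  simp only [hG]
  rw [inner_real_smul, kerF, Complex.conj_tsum, ← tsum_mul_left]
  refine tsum_congr fun k => ?_
  simp only [map_mul, map_pow, Complex.conj_ofReal, mul_pow]
  ring

lemma kerF_continuousOn {n : ℕ} (hn : 1 ≤ n) {ω : ℝ → ℝ} (hω : IsWeight ω) (hD : DHat ω)
    (hpos : ∀ r ∈ Set.Ico (0:ℝ) 1, 0 < wh ω r) : ContinuousOn (kerF n ω) (ball 0 1) := by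
  obtain ⟨C, -, hC⟩ := kerF_bound hn hω hD hpos
  exact (kerF_differentiableOn fun w hw => (hC w hw).1).continuousOn

lemma kerF_inAp {n : ℕ} (hn : 1 ≤ n) {ω : ℝ → ℝ} (hω : IsWeight ω) (hD : DHat ω)
    (hpos : ∀ r ∈ Set.Ico (0:ℝ) 1, 0 < wh ω r) {z : En n} (hz : z ∈ Bl n) :
    InAp n 2 ω (fun u => kerF n ω (inner ℂ z u)) := by
  have := isFinite_wV hn hω
  obtain ⟨C, -, hC⟩ := kerF_bound hn hω hD hpos
  have hz1 : ‖z‖ < 1 := by simpa [Bl] using hz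
  have hd : DifferentiableOn ℂ (fun u => kerF n ω (inner ℂ z u)) (Bl n) := by
    refine (kerF_differentiableOn fun w hw => (hC w hw).1).comp
      ((innerSL ℂ z).differentiable.differentiableOn) fun u hu => ?_
    simpa using norm_inner_lt hz1.le hu
  refine ⟨hd, (integrable_wV_iff hω _).1 ?_⟩
  obtain ⟨M, hM⟩ := (isCompact_closedBall (0 : ℂ) ‖z‖).exists_bound_of_continuousOn
    ((kerF_continuousOn hn hω hD hpos).mono (closedBall_subset_ball hz1))
  refine Integrable.of_bound ?_ (M ^ 2) ?_
  · simp_rw [Real.rpow_two]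
    exact ((aesm_wV hd.continuousOn).norm).pow 2
  · filter_upwards [ae_wV n ω] with u hu
    have hu1 : ‖u‖ < 1 := by simpa [Bl] using hu
    rw [Real.rpow_two, norm_pow, norm_norm]
    refine pow_le_pow_left₀ (norm_nonneg _) (hM _ ?_) 2
    have h1 := norm_inner_le_norm (𝕜 := ℂ) z u
    have : ‖(inner ℂ z u : ℂ)‖ ≤ ‖z‖ := h1.trans (mul_le_of_le_one_right (norm_nonneg _) hu1.le)
    simpa using this

/-- Identification of the reproducing kernel: the reproducing property of `B` applied to
`F(⟨u,·⟩)` is the conjugate of that of `F` applied to `B_z`. -/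
lemma norm_kernel {n : ℕ} (hn : 1 ≤ n) {ω : ℝ → ℝ} (hω : IsWeight ω) (hD : DHat ω)
    (hpos : ∀ r ∈ Set.Ico (0:ℝ) 1, 0 < wh ω r) {B : En n → En n → ℂ} (hB : IsRepKernel n ω B)
    {z u : En n} (hz : z ∈ Bl n) (hu : u ∈ Bl n) : ‖B z u‖ = ‖kerF n ω (inner ℂ z u)‖ := by
  have h1 := hB.2 _ (kerF_inAp hn hω hD hpos hu) z hz
  have h2 := kerF_repro hn hω hD hpos (hB.1 z hz) hu
  rw [← integral_wV hω] at h1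
  have h3 : kerF n ω (inner ℂ u z) = (starRingEnd ℂ) (B z u) := by
    rw [h1, h2, ← integral_conj]
    refine integral_congr_ae (Eventually.of_forall fun x => ?_)
    simp only [map_mul, Complex.conj_conj]
    ring
  rw [← RCLike.norm_conj (B z u), ← h3, ← inner_conj_symm u z, kerF_conj, RCLike.norm_conj]

/-! ### A Poisson-type inequality -/

/-- For a rotation invariant measure, `∫ |1 - τ⟨z,u⟩|^{-2n} dν ≤ (1-τ)^{-n} ν(𝔹)`. Expanding
`(1 - s)^{-n}` with coefficients `b_k = C(k+n-1, n-1)`, orthogonality leaves `∑ b_k² M_k`, and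
`b_k` times the spherical moment is `1`. -/
lemma poisson_integral {n : ℕ} (hn : 1 ≤ n) {ν : Measure (En n)} [IsFiniteMeasure ν] (hν : RotInv ν)
    (hB : ∀ᵐ u ∂ν, u ∈ Bl n) {z : En n} (hz : ‖z‖ ≤ 1) {τ : ℝ} (h0 : 0 ≤ τ) (h1 : τ < 1) :
    Integrable (fun u => (‖1 - (τ : ℂ) * inner ℂ z u‖ ^ (2 * n))⁻¹) ν ∧
    ∫ u, (‖1 - (τ : ℂ) * inner ℂ z u‖ ^ (2 * n))⁻¹ ∂ν ≤ ((1 - τ) ^ n)⁻¹ * ν.real Set.univ := by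
  obtain ⟨e, he, hze⟩ := exists_polar hn z
  obtain ⟨d, rfl⟩ := Nat.exists_eq_add_of_le' hn
  set r : ℝ := τ * ‖z‖ with hr
  have hr0 : 0 ≤ r := by positivity
  have hrτ : r ≤ τ := mul_le_of_le_one_right h0 hz
  have hr1 : r < 1 := hrτ.trans_lt h1
  have hin : ∀ u, (τ : ℂ) * inner ℂ z u = r * inner ℂ e u := fun u => by
    conv_lhs => rw [hze, inner_smul_left]
    rw [hr, Complex.conj_ofReal]; push_cast; ring
  simp only [hin]
  set b : ℕ → ℝ := fun k => (k + d).choose d * r ^ k with hb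
  set G : ℂ → ℂ := fun s => ((1 - r * s) ^ (d + 1))⁻¹ with hG
  have hbsum : HasSum b (((1 - r) ^ (d + 1))⁻¹) := by
    have := hasSum_choose_mul_geometric_of_norm_lt_one d
      (show ‖r‖ < 1 by rwa [Real.norm_of_nonneg hr0])
    simpa [one_div] using this
  have hlt : ∀ s : ℂ, ‖s‖ < 1 → ‖(r : ℂ) * s‖ < 1 := fun s hs => by
    rw [norm_mul, Complex.norm_real, Real.norm_of_nonneg hr0]
    nlinarith [norm_nonneg s]
  have hGs : ∀ s : ℂ, ‖s‖ < 1 → HasSum (fun k => (b k : ℂ) * s ^ k) (G s) := fun s hs => by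
    have := hasSum_choose_mul_geometric_of_norm_lt_one d (hlt s hs)
    rw [one_div] at this
    refine this.congr_fun fun k => ?_
    simp only [hb]; push_cast; ring
  have hlow : ∀ s : ℂ, ‖s‖ < 1 → 1 - r ≤ ‖1 - r * s‖ := fun s hs => by
    have h2 := norm_sub_norm_le (1 : ℂ) (r * s)
    rw [norm_one, norm_mul, Complex.norm_real, Real.norm_of_nonneg hr0] at h2
    nlinarith [norm_nonneg s]
  have hGb : ∀ s : ℂ, ‖s‖ < 1 → ‖G s‖ ≤ ((1 - r) ^ (d + 1))⁻¹ := fun s hs => by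
    simp only [hG, norm_inv, norm_pow]
    have := hlow s hs
    have h3 : 0 < 1 - r := by linarith
    gcongr
  have hGm : Measurable fun u : En (d + 1) => G (inner ℂ e u) := by
    have hc : Continuous fun u : En (d + 1) => (1 - r * inner ℂ e u : ℂ) ^ (d + 1) := by fun_prop
    exact hc.measurable.inv
  have hsm : Measurable fun u : En (d + 1) => (starRingEnd ℂ) (inner ℂ e u : ℂ) :=
    Continuous.measurable (by fun_prop)
  set c : ℝ := ((1 - r) ^ (d + 1))⁻¹ with hc
  have hbk : ∀ k, 0 ≤ b k := fun k => by simp only [hb]; positivity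
  have hc0 : 0 ≤ c := by
    have h3 : 0 < 1 - r := by linarith
    positivity
  have hbd : ∀ k, ∀ᵐ u ∂ν, ‖G (inner ℂ e u) * (starRingEnd ℂ) (inner ℂ e u) ^ k‖ ≤ c := by
    intro k
    filter_upwards [hB] with u hu
    have hs := norm_inner_lt he.le hu
    rw [norm_mul, norm_pow, RCLike.norm_conj]
    calc _ ≤ c * 1 := mul_le_mul (hGb _ hs) (pow_le_one₀ (norm_nonneg _) hs.le) (by positivity) hc0
      _ = c := mul_one c
  have hInt : ∀ k, Integrable (fun u => G (inner ℂ e u) * (starRingEnd ℂ) (inner ℂ e u) ^ k) ν :=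
    fun k => Integrable.of_bound ((hGm.mul (hsm.pow_const k)).aestronglyMeasurable) c (hbd k)
  have hsum : Summable fun k => ∫ u, ‖(b k : ℂ) *
      (G (inner ℂ e u) * (starRingEnd ℂ) (inner ℂ e u) ^ k)‖ ∂ν := by
    refine Summable.of_nonneg_of_le (fun k => integral_nonneg fun u => norm_nonneg _) (fun k => ?_)
      (hbsum.summable.mul_right (c * ν.real Set.univ))
    simp only [norm_mul (b k : ℂ)]
    rw [integral_const_mul, Complex.norm_real, Real.norm_of_nonneg (hbk k)]
    refine mul_le_mul_of_nonneg_left ?_ (hbk k)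
    calc _ ≤ ∫ u, c ∂ν := integral_mono_ae (hInt k).norm (integrable_const _) (hbd k)
      _ = _ := by rw [integral_const, smul_eq_mul, mul_comm]
  have hS := hasSum_integral_of_summable_integral_norm (fun k => (hInt k).const_mul (b k : ℂ)) hsum
  have hterm : ∀ k, ∫ u, (b k : ℂ) * (G (inner ℂ e u) * (starRingEnd ℂ) (inner ℂ e u) ^ k) ∂ν
      = ((b k * r ^ k * ∫ u, ‖u‖ ^ (2 * k) ∂ν : ℝ) : ℂ) := fun k => by
    rw [integral_const_mul, integral_coeff hν hB he.le hGs k (hInt k), moment_eq hn he k hν hB]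
    have := choose_mul_sphMom d k
    rw [← Complex.ofReal_mul, ← Complex.ofReal_mul]
    congr 1
    simp only [hb]
    linear_combination ((k + d).choose d * r ^ k * r ^ k * ∫ u, ‖u‖ ^ (2 * k) ∂ν) * this
  have hpt : ∀ᵐ u ∂ν, ∑' k, (b k : ℂ) * (G (inner ℂ e u) * (starRingEnd ℂ) (inner ℂ e u) ^ k)
      = (((‖1 - (r : ℂ) * inner ℂ e u‖ ^ (2 * (d + 1)))⁻¹ : ℝ) : ℂ) := by
    filter_upwards [hB] with u hu
    have hs := norm_inner_lt he.le hu
    set s : ℂ := inner ℂ e u with hsdef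
    have h2 := (hGs ((starRingEnd ℂ) s) (by rwa [RCLike.norm_conj])).mul_left (G s)
    have h3 : G ((starRingEnd ℂ) s) = (starRingEnd ℂ) (G s) := by simp [hG]
    rw [h3, RCLike.mul_conj] at h2
    rw [show (((‖1 - (r : ℂ) * s‖ ^ (2 * (d + 1)))⁻¹ : ℝ) : ℂ) = ((‖G s‖ : ℂ)) ^ 2 by
      simp only [hG, norm_inv, norm_pow]; push_cast; rw [inv_pow, ← pow_mul, mul_comm 2]]
    refine Eq.trans (tsum_congr fun k => ?_) h2.tsum_eq
    ring
  rw [integral_congr_ae hpt, integral_complex_ofReal] at hS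
  simp only [hterm] at hS
  have hS' := Complex.hasSum_ofReal.1 hS
  refine ⟨?_, ?_⟩
  · refine Integrable.of_bound (Measurable.aestronglyMeasurable ?_) (c ^ 2) ?_
    · have hc : Continuous fun u : En (d + 1) => ‖1 - (r : ℂ) * inner ℂ e u‖ ^ (2 * (d + 1)) := by
        fun_prop
      exact hc.measurable.inv
    · filter_upwards [hB] with u hu
      have h3 := hGb _ (norm_inner_lt he.le hu)
      rw [Real.norm_of_nonneg (by positivity)]
      calc _ = ‖G (inner ℂ e u)‖ ^ 2 := by
            simp only [hG, norm_inv, norm_pow]; rw [inv_pow, ← pow_mul, mul_comm 2]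
        _ ≤ _ := by gcongr
  · have hU : ∀ k, ∫ u, ‖u‖ ^ (2 * k) ∂ν ≤ ν.real Set.univ := fun k => by
      calc _ ≤ ∫ u, (1 : ℝ) ∂ν := by
            refine integral_mono_ae (integrable_of_continuous hB (by fun_prop)) (integrable_const _) ?_
            filter_upwards [hB] with u hu
            exact pow_le_one₀ (norm_nonneg _) (le_of_lt (by simpa [Bl] using hu))
        _ = _ := by simp
    have hcτ : c ≤ ((1 - τ) ^ (d + 1))⁻¹ := by
      have : 0 < 1 - τ := by linarith
      simp only [hc]; gcongr
    refine le_trans (hasSum_le (fun k => ?_) hS' (hbsum.mul_right (ν.real Set.univ)))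
      (mul_le_mul_of_nonneg_right hcτ measureReal_nonneg)
    refine mul_le_mul (mul_le_of_le_one_right (hbk k) (pow_le_one₀ hr0 hr1.le)) (hU k)
      (integral_nonneg fun u => by positivity) (hbk k)

lemma poisson_radial {n : ℕ} (hn : 1 ≤ n) {ω : ℝ → ℝ} (hω : IsWeight ω) {z : En n} (hz : ‖z‖ ≤ 1)
    {τ : ℝ} (h0 : 0 ≤ τ) (h1 : τ < 1) {g : ℝ → ENNReal} (hg : Measurable g) :
    ∫⁻ u, ENNReal.ofReal ((‖1 - (τ : ℂ) * inner ℂ z u‖ ^ (2 * n))⁻¹) * g ‖u‖ ∂(wV n ω)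
      ≤ ENNReal.ofReal (((1 - τ) ^ n)⁻¹) * ∫⁻ u, g ‖u‖ ∂(wV n ω) := by
  have hτ : 0 < 1 - τ := by linarith
  by_cases hfin : ∫⁻ u, g ‖u‖ ∂(wV n ω) = ⊤
  · rw [hfin, ENNReal.mul_top (by rw [Ne, ENNReal.ofReal_eq_zero, not_le]; positivity)]
    exact le_top
  have hgm : Measurable fun u : En n => g ‖u‖ := hg.comp measurable_norm
  set ν := (wV n ω).withDensity fun u => g ‖u‖ with hν
  have : IsFiniteMeasure ν := isFiniteMeasure_withDensity hfin
  have hm : Measurable fun u : En n =>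
      ENNReal.ofReal ((‖1 - (τ : ℂ) * inner ℂ z u‖ ^ (2 * n))⁻¹) := by
    have hc : Continuous fun u : En n => ‖1 - (τ : ℂ) * inner ℂ z u‖ ^ (2 * n) := by fun_prop
    exact hc.measurable.inv.ennreal_ofReal
  have key := poisson_integral hn ((rotInv_wV n hω).withDensity hg)
    ((withDensity_absolutelyContinuous _ _).ae_le (ae_wV n ω)) hz h0 h1
  have h2 : ∫⁻ u, ENNReal.ofReal ((‖1 - (τ : ℂ) * inner ℂ z u‖ ^ (2 * n))⁻¹) * g ‖u‖ ∂(wV n ω)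
      = ∫⁻ u, ENNReal.ofReal ((‖1 - (τ : ℂ) * inner ℂ z u‖ ^ (2 * n))⁻¹) ∂ν := by
    rw [hν, lintegral_withDensity_eq_lintegral_mul _ hgm hm]
    refine lintegral_congr fun u => ?_
    rw [Pi.mul_apply, mul_comm]
  have h3 : ∫⁻ u, g ‖u‖ ∂(wV n ω) = ENNReal.ofReal (ν.real Set.univ) := by
    rw [measureReal_def, ENNReal.ofReal_toReal (measure_ne_top _ _), hν,
      withDensity_apply _ MeasurableSet.univ, setLIntegral_univ]
  rw [h2, h3, ← ENNReal.ofReal_mul (by positivity),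
    ← ofReal_integral_eq_lintegral_ofReal key.1 (Eventually.of_forall fun u => by positivity)]
  exact ENNReal.ofReal_le_ofReal key.2

/-! ### Reverse doubling and geometric sums -/

lemma reverse_doubling {ω : ℝ → ℝ} (hω : IsWeight ω) (hD : DCheck ω) :
    ∃ A θ : ℝ, 0 < A ∧ 0 < θ ∧ θ < 1 ∧ ∀ i j, dyV ω (i + j) ≤ A * θ ^ j * dyV ω i := by
  obtain ⟨C, K, hC, hK, h⟩ := hD
  obtain ⟨s, hs⟩ := pow_unbounded_of_one_lt K (one_lt_two)
  have hs0 : s ≠ 0 := by rintro rfl; norm_num at hs; linarith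
  have hC0 : 0 < C := by linarith
  set θ : ℝ := C⁻¹ ^ ((s : ℝ)⁻¹) with hθ
  have hθs : θ ^ s = C⁻¹ := Real.rpow_inv_natCast_pow (by positivity) hs0
  have hθ0 : 0 < θ := by positivity
  have hθ1 : θ < 1 := Real.rpow_lt_one (by positivity) (inv_lt_one_of_one_lt₀ hC) (by positivity)
  have hV0 : ∀ i, 0 ≤ dyV ω i := fun i =>
    setIntegral_nonneg measurableSet_Ioo fun t ht => hω.1 t ⟨(dy_mem i).1.trans ht.1.le, ht.2⟩
  have hstep : ∀ i, dyV ω (i + s) ≤ C⁻¹ * dyV ω i := fun i => by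
    have h1 := h _ (dy_mem i)
    have hp : (0 : ℝ) < (1 / 2) ^ i := by positivity
    have h2 : dyV ω (i + s) ≤ wh ω (1 - (1 - (1 - (1 / 2) ^ i)) / K) := by
      refine wh_anti hω ?_ ?_
      · have := (dy_mem i).1
        rw [sub_nonneg, div_le_one (by linarith)]
        linarith
      · rw [sub_sub_cancel, pow_add, div_eq_mul_inv]
        have : ((1 : ℝ) / 2) ^ s ≤ K⁻¹ := by
          rw [one_div, inv_pow]
          exact inv_anti₀ (by linarith) hs.le
        nlinarith
    rw [inv_mul_eq_div, le_div_iff₀ hC0, mul_comm]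
    exact le_trans (by gcongr) h1
  have hq : ∀ q i, dyV ω (i + s * q) ≤ C⁻¹ ^ q * dyV ω i := by
    intro q
    induction q with
    | zero => intro i; simp
    | succ q ih =>
      intro i
      rw [mul_add, mul_one, ← add_assoc]
      refine (hstep _).trans ?_
      rw [pow_succ', mul_assoc]
      exact mul_le_mul_of_nonneg_left (ih i) (by positivity)
  refine ⟨C, θ, hC0, hθ0, hθ1, fun i j => ?_⟩
  have hj := Nat.div_add_mod j s
  have hjs : j ≤ s * (j / s + 1) := by
    have := Nat.mod_lt j (Nat.pos_of_ne_zero hs0)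
    rw [mul_add]; omega
  refine (dyV_anti hω (show i + s * (j / s) ≤ i + j by omega)).trans ((hq _ _).trans ?_)
  refine mul_le_mul_of_nonneg_right ?_ (hV0 i)
  have h3 : θ ^ (s * (j / s + 1)) ≤ θ ^ j := pow_le_pow_of_le_one hθ0.le hθ1.le hjs
  rw [pow_mul, hθs, pow_succ] at h3
  calc C⁻¹ ^ (j / s) = C * (C⁻¹ ^ (j / s) * C⁻¹) := by field_simp
    _ ≤ C * θ ^ j := by gcongr

lemma tsum_geom_ge (t : ENNReal) (i : ℕ) :
    ∑' m : ℕ, (if i ≤ m then t ^ (m - i) else 0) ≤ (1 - t)⁻¹ := by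
  rw [← ENNReal.tsum_geometric]
  have h := (add_right_injective i).tsum_eq (f := fun m : ℕ => if i ≤ m then t ^ (m - i) else 0)
    (fun m hm => by
      rw [Function.mem_support] at hm
      have : i ≤ m := by by_contra h; simp [h] at hm
      exact ⟨m - i, by simp; omega⟩)
  rw [← h]
  simp

lemma tsum_geom_le (t : ENNReal) (m : ℕ) :
    ∑' i : ℕ, (if i ≤ m then t ^ (m - i) else 0) ≤ (1 - t)⁻¹ := by
  rw [← ENNReal.tsum_geometric, tsum_eq_sum (s := Finset.range (m + 1)) (fun i hi => by
    rw [Finset.mem_range] at hi; rw [if_neg (by omega)])]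
  rw [Finset.sum_congr rfl (g := fun i => t ^ (m + 1 - 1 - i)) fun i hi => by
    rw [Finset.mem_range] at hi; rw [if_pos (by omega), Nat.add_sub_cancel]]
  rw [Finset.sum_range_reflect (fun i => t ^ i)]
  exact ENNReal.sum_le_tsum _

/-! ### Integral estimate for the kernel against powers of `ω̂` -/

/-- `ω̂` as an extended non-negative function; the truncation `max r 0` only serves to make it
antitone, hence measurable, on all of `ℝ`. -/
def whE (ω : ℝ → ℝ) (r : ℝ) : ENNReal := ENNReal.ofReal (wh ω (max r 0))

lemma measurable_whE {ω : ℝ → ℝ} (hω : IsWeight ω) : Measurable (whE ω) := by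
  refine Antitone.measurable fun r s hrs => ?_
  exact ENNReal.ofReal_le_ofReal (wh_anti hω (le_max_right _ _) (max_le_max_right 0 hrs))

lemma whE_anti {ω : ℝ → ℝ} (hω : IsWeight ω) {r s : ℝ} (hrs : r ≤ s) : whE ω s ≤ whE ω r :=
  ENNReal.ofReal_le_ofReal (wh_anti hω (le_max_right _ _) (max_le_max_right 0 hrs))

lemma whE_dy (ω : ℝ → ℝ) (i : ℕ) : whE ω (1 - (1 / 2) ^ i) = ENNReal.ofReal (dyV ω i) := by
  rw [whE, max_eq_left (dy_mem i).1, dyV]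

lemma exists_dyadic {r : ℝ} (h0 : 0 ≤ r) (h1 : r < 1) :
    ∃ l : ℕ, 1 - (1 / 2) ^ l ≤ r ∧ r < 1 - (1 / 2) ^ (l + 1) := by
  obtain ⟨l, h2, h3⟩ := exists_nat_pow_near_of_lt_one (x := 1 - r) (y := (1 / 2 : ℝ))
    (by linarith) (by linarith) (by norm_num) (by norm_num)
  exact ⟨l, by linarith, by linarith⟩

lemma index_le {i l : ℕ} {r : ℝ} (h1 : 1 - 2 * (1 / 2) ^ i ≤ r) (h2 : r < 1 - (1 / 2) ^ (l + 1)) :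
    i ≤ l + 1 := by
  by_contra h
  have h3 : ((1 : ℝ) / 2) ^ i ≤ (1 / 2) ^ (l + 1 + 1) :=
    pow_le_pow_of_le_one (by norm_num) (by norm_num) (by omega)
  rw [pow_succ _ (l + 1)] at h3
  linarith

lemma wV_shell {n : ℕ} (hn : 1 ≤ n) {ω : ℝ → ℝ} (hω : IsWeight ω) (hD : DHat ω)
    (hpos : ∀ r ∈ Set.Ico (0:ℝ) 1, 0 < wh ω r) :
    ∃ C : ENNReal, C ≠ ⊤ ∧ ∀ l : ℕ, wV n ω {u | 1 - (1 / 2) ^ l ≤ ‖u‖}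
      ≤ C * ENNReal.ofReal (dyV ω (l + 1)) := by
  have := isFinite_wV hn hω
  obtain ⟨c, hc, hcs⟩ := wV_tail hn hω hD
  obtain ⟨C, hC, hDC⟩ := hD
  have hV : ∀ i, 0 < dyV ω i := fun i => hpos _ (dy_mem i)
  refine ⟨ENNReal.ofReal ((wV n ω).real Set.univ / dyV ω 1 + 2 * n * C ^ 2), ENNReal.ofReal_ne_top,
    fun l => ?_⟩
  rw [← ENNReal.ofReal_mul (by have := hV 1; positivity)]
  refine (ENNReal.le_ofReal_iff_toReal_le (measure_ne_top _ _) (by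
    have := hV 1; have := hV (l + 1); positivity)).2 ?_
  change (wV n ω).real _ ≤ _
  have hm0 : 0 ≤ (wV n ω).real Set.univ := measureReal_nonneg
  have p1 := hV 1
  have p2 := hV (l + 1)
  rw [add_mul]
  rcases l with _ | l
  · have h1 : (wV n ω).real Set.univ / dyV ω 1 * dyV ω (0 + 1) = (wV n ω).real Set.univ := by
      rw [zero_add]; field_simp
    rw [h1]
    have h2 : (wV n ω).real {u | (1 : ℝ) - (1 / 2) ^ 0 ≤ ‖u‖} ≤ (wV n ω).real Set.univ :=
      measureReal_mono (Set.subset_univ _)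
    have h3 : 0 ≤ 2 * n * C ^ 2 * dyV ω (0 + 1) := by positivity
    linarith
  · have h2 : (wV n ω).real {u | (1 : ℝ) - (1 / 2) ^ (l + 1) ≤ ‖u‖}
        ≤ (wV n ω).real {u | (1 : ℝ) - (1 / 2) ^ l < ‖u‖} := by
      refine measureReal_mono fun u hu => ?_
      have hu' : (1 : ℝ) - (1 / 2) ^ (l + 1) ≤ ‖u‖ := hu
      rw [pow_succ] at hu'
      have : (0 : ℝ) < (1 / 2) ^ l := by positivity
      change (1 : ℝ) - (1 / 2) ^ l < ‖u‖
      linarith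
    have h3 : (wV n ω).real {u | (1 : ℝ) - (1 / 2) ^ l < ‖u‖} ≤ 2 * n * dyV ω l :=
      (hcs _ (dy_mem l)).2
    have h4 := dyV_doubling hDC l
    have h5 := dyV_doubling hDC (l + 1)
    have h6 : 2 * n * dyV ω l ≤ 2 * n * C ^ 2 * dyV ω (l + 1 + 1) := by
      calc 2 * n * dyV ω l ≤ 2 * n * (C * (C * dyV ω (l + 1 + 1))) := by
            gcongr
            exact h4.trans (by gcongr)
        _ = _ := by ring
    have h7 : 0 ≤ (wV n ω).real Set.univ / dyV ω 1 * dyV ω (l + 1 + 1) := by positivity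
    linarith

lemma rev_ennreal {ω : ℝ → ℝ} (hω : IsWeight ω) (hD : DCheck ω) :
    ∃ A θ : ENNReal, A ≠ ⊤ ∧ θ < 1 ∧ ∀ i m, i ≤ m →
      ENNReal.ofReal (dyV ω m) ≤ A * θ ^ (m - i) * ENNReal.ofReal (dyV ω i) := by
  obtain ⟨A, θ, hA, h0, h1, h⟩ := reverse_doubling hω hD
  refine ⟨ENNReal.ofReal A, ENNReal.ofReal θ, ENNReal.ofReal_ne_top, by simpa using h1,
    fun i m him => ?_⟩
  rw [← ENNReal.ofReal_pow h0.le, ← ENNReal.ofReal_mul hA.le, ← ENNReal.ofReal_mul (by positivity)]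
  refine ENNReal.ofReal_le_ofReal ?_
  have := h i (m - i)
  rwa [Nat.add_sub_cancel' him] at this

/-- `∫_{|u| ≥ 1 - 2·2^{-i}} ω̂^{-ε} ω dV ≲ V_i^{1-ε}`: on the `l`-th dyadic shell the integrand is at
most `V_{l+1}^{-ε}`, and reverse doubling makes the sum over shells geometric. -/
lemma tail_whE {n : ℕ} (hn : 1 ≤ n) {ω : ℝ → ℝ} (hω : IsWeight ω) (hD : DD ω)
    (hpos : ∀ r ∈ Set.Ico (0:ℝ) 1, 0 < wh ω r) {ε : ℝ} (h0 : 0 < ε) (h1 : ε < 1) :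
    ∃ C : ENNReal, C ≠ ⊤ ∧ ∀ i : ℕ,
      ∫⁻ u, (Set.Ici (1 - 2 * (1 / 2) ^ i)).indicator (fun r => whE ω r ^ (-ε)) ‖u‖ ∂(wV n ω)
        ≤ C * ENNReal.ofReal (dyV ω i) ^ (1 - ε) := by
  obtain ⟨C, hC, hsh⟩ := wV_shell hn hω hD.1 hpos
  obtain ⟨A, θ, hA, hθ, hrev⟩ := rev_ennreal hω hD.2
  have hV : ∀ i, 0 < dyV ω i := fun i => hpos _ (dy_mem i)
  have hε : 0 < 1 - ε := by linarith
  set t : ENNReal := θ ^ (1 - ε) with ht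
  have ht1 : t < 1 := by
    rw [ht]; exact ENNReal.rpow_lt_one hθ hε
  refine ⟨C * A ^ (1 - ε) * (1 - t)⁻¹, ?_, fun i => ?_⟩
  · refine ENNReal.mul_ne_top (ENNReal.mul_ne_top hC ?_) ?_
    · exact ENNReal.rpow_ne_top_of_nonneg hε.le hA
    · rw [Ne, ENNReal.inv_eq_top, tsub_eq_zero_iff_le, not_le]; exact ht1
  set v : ℕ → ENNReal := fun i => ENNReal.ofReal (dyV ω i) with hv
  have hv0 : ∀ i, v i ≠ 0 := fun i => by simpa [hv] using hV i
  have hvt : ∀ i, v i ≠ ⊤ := fun i => ENNReal.ofReal_ne_top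
  have hpt : ∀ᵐ u ∂(wV n ω),
      (Set.Ici (1 - 2 * (1 / 2) ^ i)).indicator (fun r => whE ω r ^ (-ε)) ‖u‖
      ≤ ∑' l : ℕ, {u : En n | 1 - (1 / 2) ^ l ≤ ‖u‖}.indicator
          (fun _ => if i ≤ l + 1 then v (l + 1) ^ (-ε) else 0) u := by
    filter_upwards [ae_wV n ω] with u hu
    have hu1 : ‖u‖ < 1 := by simpa [Bl] using hu
    by_cases hi : 1 - 2 * (1 / 2) ^ i ≤ ‖u‖
    · obtain ⟨l, hl1, hl2⟩ := exists_dyadic (norm_nonneg u) hu1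
      rw [Set.indicator_of_mem (by exact hi)]
      refine le_trans ?_ (ENNReal.le_tsum l)
      rw [Set.indicator_of_mem (by exact hl1), if_pos (index_le hi hl2), ENNReal.rpow_neg,
        ENNReal.rpow_neg, ENNReal.inv_le_inv]
      refine ENNReal.rpow_le_rpow ?_ h0.le
      simp only [hv, ← whE_dy]
      exact whE_anti hω hl2.le
    · rw [Set.indicator_of_notMem (by exact hi)]
      exact zero_le
  have hms : ∀ l : ℕ, MeasurableSet {u : En n | (1 : ℝ) - (1 / 2) ^ l ≤ ‖u‖} := fun l =>
    measurableSet_le measurable_const measurable_norm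
  calc _ ≤ ∑' l : ℕ, (if i ≤ l + 1 then v (l + 1) ^ (-ε) else 0)
          * wV n ω {u : En n | 1 - (1 / 2) ^ l ≤ ‖u‖} := by
        refine (lintegral_mono_ae hpt).trans_eq ?_
        rw [lintegral_tsum fun l => (measurable_const.indicator (hms l)).aemeasurable]
        exact tsum_congr fun l => lintegral_indicator_const (hms l) _
    _ ≤ ∑' l : ℕ, (if i ≤ l + 1 then
          C * A ^ (1 - ε) * v i ^ (1 - ε) * t ^ (l + 1 - i) else 0) := by
        refine ENNReal.tsum_le_tsum fun l => ?_
        split_ifs with h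
        · calc _ ≤ v (l + 1) ^ (-ε) * (C * v (l + 1)) := by gcongr; exact hsh l
            _ = C * v (l + 1) ^ (1 - ε) := by
                rw [sub_eq_neg_add, ENNReal.rpow_add _ _ (hv0 _) (hvt _), ENNReal.rpow_one]; ring
            _ ≤ C * (A * θ ^ (l + 1 - i) * v i) ^ (1 - ε) := by
                gcongr
                exact hrev i (l + 1) h
            _ = _ := by
                rw [ENNReal.mul_rpow_of_nonneg _ _ hε.le, ENNReal.mul_rpow_of_nonneg _ _ hε.le,
                  ht, ← ENNReal.rpow_natCast, ← ENNReal.rpow_natCast, ← ENNReal.rpow_mul,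
                  ← ENNReal.rpow_mul, mul_comm (1 - ε) _]
                ring
        · simp
    _ ≤ ∑' m : ℕ, (if i ≤ m then C * A ^ (1 - ε) * v i ^ (1 - ε) * t ^ (m - i) else 0) :=
        ENNReal.tsum_comp_le_tsum_of_injective (add_left_injective 1)
          (fun m => if i ≤ m then C * A ^ (1 - ε) * v i ^ (1 - ε) * t ^ (m - i) else 0)
    _ = C * A ^ (1 - ε) * v i ^ (1 - ε) * ∑' m : ℕ, (if i ≤ m then t ^ (m - i) else 0) := by
        rw [← ENNReal.tsum_mul_left]
        exact tsum_congr fun m => by split_ifs <;> simp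
    _ ≤ C * A ^ (1 - ε) * v i ^ (1 - ε) * (1 - t)⁻¹ := by
        gcongr
        exact tsum_geom_ge t i
    _ = _ := by ring

lemma sum_whE {ω : ℝ → ℝ} (hω : IsWeight ω) (hD : DD ω)
    (hpos : ∀ r ∈ Set.Ico (0:ℝ) 1, 0 < wh ω r) {ε : ℝ} (h0 : 0 < ε) :
    ∃ C : ENNReal, C ≠ ⊤ ∧ ∀ r : ℝ, 0 ≤ r → r < 1 →
      ∑' i : ℕ, (if 1 - 2 * (1 / 2) ^ i ≤ r then ENNReal.ofReal (dyV ω i) ^ (-ε) else 0)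
        ≤ C * whE ω r ^ (-ε) := by
  obtain ⟨A, θ, hA, hθ, hrev⟩ := rev_ennreal hω hD.2
  obtain ⟨D, hD1, hDC⟩ := hD.1
  have hV : ∀ i, 0 < dyV ω i := fun i => hpos _ (dy_mem i)
  set t : ENNReal := θ ^ ε with ht
  have ht1 : t < 1 := by
    rw [ht]; exact ENNReal.rpow_lt_one hθ h0
  set v : ℕ → ENNReal := fun i => ENNReal.ofReal (dyV ω i) with hv
  have hv0 : ∀ i, v i ≠ 0 := fun i => by simpa [hv] using hV i
  have hvt : ∀ i, v i ≠ ⊤ := fun i => ENNReal.ofReal_ne_top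
  -- comparing `-ε`-th powers of comparable quantities
  have hcomp : ∀ (c x y : ENNReal), x ≠ 0 → x ≠ ⊤ → y ≠ 0 → y ≠ ⊤ → x ≤ c * y →
      y ^ (-ε) ≤ c ^ ε * x ^ (-ε) := by
    intro c x y hx hxt hy hyt h
    have h2 : x ^ ε ≤ c ^ ε * y ^ ε := by
      rw [← ENNReal.mul_rpow_of_nonneg _ _ h0.le]
      exact ENNReal.rpow_le_rpow h h0.le
    have hx' : x ^ ε ≠ 0 := by simp [hx, h0, hxt]
    have hxt' : x ^ ε ≠ ⊤ := ENNReal.rpow_ne_top_of_nonneg h0.le hxt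
    have hy' : y ^ ε ≠ 0 := by simp [hy, h0, hyt]
    have hyt' : y ^ ε ≠ ⊤ := ENNReal.rpow_ne_top_of_nonneg h0.le hyt
    rw [ENNReal.rpow_neg, ENNReal.rpow_neg]
    calc (y ^ ε)⁻¹ = x ^ ε * (x ^ ε)⁻¹ * (y ^ ε)⁻¹ := by
          rw [ENNReal.mul_inv_cancel hx' hxt', one_mul]
      _ ≤ c ^ ε * y ^ ε * (x ^ ε)⁻¹ * (y ^ ε)⁻¹ := by gcongr
      _ = c ^ ε * (x ^ ε)⁻¹ * (y ^ ε * (y ^ ε)⁻¹) := by ring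
      _ = c ^ ε * (x ^ ε)⁻¹ := by rw [ENNReal.mul_inv_cancel hy' hyt', mul_one]
  refine ⟨A ^ ε * (1 - t)⁻¹ * ENNReal.ofReal D ^ ε, ?_, fun r hr0 hr1 => ?_⟩
  · refine ENNReal.mul_ne_top (ENNReal.mul_ne_top ?_ ?_) ?_
    · exact ENNReal.rpow_ne_top_of_nonneg h0.le hA
    · rw [Ne, ENNReal.inv_eq_top, tsub_eq_zero_iff_le, not_le]; exact ht1
    · exact ENNReal.rpow_ne_top_of_nonneg h0.le ENNReal.ofReal_ne_top
  obtain ⟨l, hl1, hl2⟩ := exists_dyadic hr0 hr1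
  have hw0 : whE ω r ≠ 0 := by
    have := hpos r ⟨hr0, hr1⟩
    simpa [whE, max_eq_left hr0] using this
  have hwD : whE ω r ≤ ENNReal.ofReal D * v (l + 1) := by
    calc whE ω r ≤ v l := by simp only [hv, ← whE_dy]; exact whE_anti hω hl1
      _ ≤ _ := by
        simp only [hv]
        rw [← ENNReal.ofReal_mul (by linarith)]
        exact ENNReal.ofReal_le_ofReal (dyV_doubling hDC l)
  have hlast := hcomp _ _ _ hw0 ENNReal.ofReal_ne_top (hv0 _) (hvt _) hwD
  calc _ ≤ ∑' i : ℕ, A ^ ε * v (l + 1) ^ (-ε) * (if i ≤ l + 1 then t ^ (l + 1 - i) else 0) := by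
        refine ENNReal.tsum_le_tsum fun i => ?_
        split_ifs with h1 h2 h2
        · refine (hcomp _ _ _ (hv0 _) (hvt _) (hv0 _) (hvt _) (hrev i (l + 1) h2)).trans_eq ?_
          rw [ENNReal.mul_rpow_of_nonneg _ _ h0.le, ht, ← ENNReal.rpow_natCast,
            ← ENNReal.rpow_natCast, ← ENNReal.rpow_mul, ← ENNReal.rpow_mul, mul_comm ε]
          ring
        · exact absurd (index_le h1 hl2) h2
        · exact zero_le
        · exact zero_le
    _ ≤ A ^ ε * v (l + 1) ^ (-ε) * (1 - t)⁻¹ := by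
        rw [ENNReal.tsum_mul_left]
        gcongr
        exact tsum_geom_le t (l + 1)
    _ ≤ A ^ ε * (ENNReal.ofReal D ^ ε * whE ω r ^ (-ε)) * (1 - t)⁻¹ := by gcongr
    _ = _ := by ring

/-- Pointwise domination of the kernel by Poisson-type kernels at all dyadic scales: at the scale
`2^{-i} ≈ |1-w|`, one has `|1 - (1-2^{-i})w| ≤ 3·2^{-i}` and both `1-|z|` and `1-|u|` are at most
`2·2^{-i}`. -/
lemma kerF_domination {n : ℕ} (hn : 1 ≤ n) {ω : ℝ → ℝ} (hω : IsWeight ω) (hD : DHat ω)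
    (hpos : ∀ r ∈ Set.Ico (0:ℝ) 1, 0 < wh ω r) :
    ∃ C : ENNReal, C ≠ ⊤ ∧ ∀ z ∈ Bl n, ∀ u ∈ Bl n,
      ENNReal.ofReal ‖kerF n ω (inner ℂ z u)‖ ≤ C * ∑' i : ℕ,
        (if 1 - 2 * (1 / 2) ^ i ≤ ‖z‖ then (ENNReal.ofReal (dyV ω i))⁻¹ else 0) *
        (ENNReal.ofReal (((1 / 2) ^ i) ^ n) *
          (ENNReal.ofReal ((‖1 - ((1 - (1 / 2) ^ i : ℝ) : ℂ) * inner ℂ z u‖ ^ (2 * n))⁻¹) *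
            (Set.Ici (1 - 2 * (1 / 2) ^ i)).indicator 1 ‖u‖)) := by
  obtain ⟨C, hC, h⟩ := kerF_bound hn hω hD hpos
  refine ⟨ENNReal.ofReal (C * 9 ^ n), ENNReal.ofReal_ne_top, fun z hz u hu => ?_⟩
  have hz1 : ‖z‖ < 1 := by simpa [Bl] using hz
  have hu1 : ‖u‖ < 1 := by simpa [Bl] using hu
  have hw := norm_inner_lt hz1.le hu
  set w : ℂ := inner ℂ z u with hwdef
  have hwz : ‖w‖ ≤ ‖z‖ := (norm_inner_le_norm z u).trans
    (mul_le_of_le_one_right (norm_nonneg _) hu1.le)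
  have hwu : ‖w‖ ≤ ‖u‖ := (norm_inner_le_norm z u).trans
    (mul_le_of_le_one_left (norm_nonneg _) hz1.le)
  have hlow : 1 - ‖w‖ ≤ ‖1 - w‖ := by
    have := norm_sub_norm_le (1 : ℂ) w
    rwa [norm_one] at this
  have hup : ‖1 - w‖ ≤ 1 + ‖w‖ := by
    have := norm_sub_le (1 : ℂ) w
    rwa [norm_one] at this
  obtain ⟨i, h2, h3⟩ := exists_nat_pow_near_of_lt_one (x := ‖1 - w‖ / 2) (y := (1 / 2 : ℝ))
    (by linarith) (by linarith) (by norm_num) (by norm_num)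
  rw [pow_succ] at h2
  set t : ℝ := (1 / 2) ^ i with ht
  have ht0 : 0 < t := by positivity
  have hF := (h w hw).2 i (by linarith)
  have hV : 0 < dyV ω i := hpos _ (dy_mem i)
  have ht1 : t ≤ 1 := pow_le_one₀ (by norm_num) (by norm_num)
  set D : ℝ := ‖1 - ((1 - t : ℝ) : ℂ) * w‖ with hDdef
  have hD3 : D ≤ 3 * t := by
    have e : 1 - ((1 - t : ℝ) : ℂ) * w = (1 - w) + (t : ℂ) * w := by push_cast; ring
    rw [hDdef, e]
    refine (norm_add_le _ _).trans ?_
    rw [norm_mul, Complex.norm_real, Real.norm_of_nonneg ht0.le]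
    nlinarith
  have hD0 : 0 < D := by
    have h5 := norm_sub_norm_le (1 : ℂ) (((1 - t : ℝ) : ℂ) * w)
    rw [norm_one, norm_mul, Complex.norm_real, Real.norm_of_nonneg (by linarith)] at h5
    have : (1 - t) * ‖w‖ ≤ ‖w‖ := mul_le_of_le_one_left (norm_nonneg _) (by linarith)
    linarith
  have h2i : ((2 : ℝ) ^ i) = t⁻¹ := by rw [ht, one_div, inv_pow, inv_inv]
  rw [h2i] at hF
  have hkey : (t⁻¹) ^ n ≤ 9 ^ n * (t ^ n * (D ^ (2 * n))⁻¹) := by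
    have e : 9 ^ n * (t ^ n * (D ^ (2 * n))⁻¹) = (9 * (t * (D ^ 2)⁻¹)) ^ n := by
      rw [pow_mul D, mul_pow, mul_pow, inv_pow (D ^ 2)]
    rw [e]
    refine pow_le_pow_left₀ (by positivity) ?_ n
    rw [← mul_assoc, ← div_eq_mul_inv, le_div_iff₀ (by positivity), inv_mul_eq_div,
      div_le_iff₀ ht0]
    nlinarith
  rw [← ENNReal.tsum_mul_left]
  refine le_trans ?_ (ENNReal.le_tsum i)
  rw [if_pos (by linarith), Set.indicator_of_mem (Set.mem_Ici.2 (by linarith)), Pi.one_apply, mul_one,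
    ← ENNReal.ofReal_inv_of_pos hV, ← ENNReal.ofReal_mul (by positivity),
    ← ENNReal.ofReal_mul (by positivity), ← ENNReal.ofReal_mul (by positivity)]
  refine ENNReal.ofReal_le_ofReal (hF.trans ?_)
  calc C * (t⁻¹ ^ n / dyV ω i) ≤ C * ((9 ^ n * (t ^ n * (D ^ (2 * n))⁻¹)) / dyV ω i) := by gcongr
    _ = _ := by rw [div_eq_mul_inv]; ring

/-- `∫ |B_z| ω̂^{-ε} ω dV ≲ ω̂(z)^{-ε}` for `0 < ε < 1`. -/
lemma kerF_schur {n : ℕ} (hn : 1 ≤ n) {ω : ℝ → ℝ} (hω : IsWeight ω) (hD : DD ω)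
    (hpos : ∀ r ∈ Set.Ico (0:ℝ) 1, 0 < wh ω r) {ε : ℝ} (h0 : 0 < ε) (h1 : ε < 1) :
    ∃ C : ENNReal, C ≠ ⊤ ∧ ∀ z ∈ Bl n,
      ∫⁻ u, ENNReal.ofReal ‖kerF n ω (inner ℂ z u)‖ * whE ω ‖u‖ ^ (-ε) ∂(wV n ω)
        ≤ C * whE ω ‖z‖ ^ (-ε) := by
  obtain ⟨C1, hC1, hdom⟩ := kerF_domination hn hω hD.1 hpos
  obtain ⟨C2, hC2, htail⟩ := tail_whE hn hω hD hpos h0 h1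
  obtain ⟨C3, hC3, hsum⟩ := sum_whE hω hD hpos h0
  have hV : ∀ i, 0 < dyV ω i := fun i => hpos _ (dy_mem i)
  refine ⟨C1 * (C2 * C3), ENNReal.mul_ne_top hC1 (ENNReal.mul_ne_top hC2 hC3), fun z hz => ?_⟩
  have hz1 : ‖z‖ < 1 := by simpa [Bl] using hz
  set v : ℕ → ENNReal := fun i => ENNReal.ofReal (dyV ω i) with hv
  have hv0 : ∀ i, v i ≠ 0 := fun i => by simpa [hv] using hV i
  have hvt : ∀ i, v i ≠ ⊤ := fun i => ENNReal.ofReal_ne_top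
  set g : ℕ → ℝ → ENNReal := fun i =>
    (Set.Ici (1 - 2 * (1 / 2) ^ i)).indicator (fun r => whE ω r ^ (-ε)) with hg
  have hwm := measurable_whE hω
  have hgm : ∀ i, Measurable (g i) := fun i =>
    (hwm.pow_const _).indicator measurableSet_Ici
  set P : ℕ → En n → ENNReal := fun i u =>
    ENNReal.ofReal ((‖1 - ((1 - (1 / 2) ^ i : ℝ) : ℂ) * inner ℂ z u‖ ^ (2 * n))⁻¹) with hP
  have hPm : ∀ i, Measurable (P i) := fun i => by
    have hc : Continuous fun u : En n =>
      ‖1 - ((1 - (1 / 2) ^ i : ℝ) : ℂ) * inner ℂ z u‖ ^ (2 * n) := by fun_prop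
    exact hc.measurable.inv.ennreal_ofReal
  set a : ℕ → ENNReal := fun i => if 1 - 2 * (1 / 2) ^ i ≤ ‖z‖ then (v i)⁻¹ else 0 with ha
  have hpt : ∀ᵐ u ∂(wV n ω), ENNReal.ofReal ‖kerF n ω (inner ℂ z u)‖ * whE ω ‖u‖ ^ (-ε)
      ≤ C1 * ∑' i, a i * (ENNReal.ofReal (((1 / 2) ^ i) ^ n) * (P i u * g i ‖u‖)) := by
    filter_upwards [ae_wV n ω] with u hu
    refine (mul_le_mul_left (hdom z hz u hu) _).trans_eq ?_
    rw [mul_assoc, ← ENNReal.tsum_mul_right]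
    congr 1
    refine tsum_congr fun i => ?_
    have : g i ‖u‖ = (Set.Ici (1 - 2 * (1 / 2) ^ i)).indicator 1 ‖u‖ * whE ω ‖u‖ ^ (-ε) := by
      simp only [hg, Set.indicator_apply]; split_ifs <;> simp
    rw [this]
    ring
  have hgi : ∀ i, Measurable fun u : En n => g i ‖u‖ := fun i => (hgm i).comp measurable_norm
  calc _ ≤ C1 * ∑' i, a i * (ENNReal.ofReal (((1 / 2) ^ i) ^ n) *
          ∫⁻ u, P i u * g i ‖u‖ ∂(wV n ω)) := by
        refine (lintegral_mono_ae hpt).trans_eq ?_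
        have m1 : ∀ i, Measurable fun u => P i u * g i ‖u‖ := fun i => (hPm i).mul (hgi i)
        have m2 : ∀ i, Measurable fun u =>
            ENNReal.ofReal (((1 / 2) ^ i) ^ n) * (P i u * g i ‖u‖) := fun i => (m1 i).const_mul _
        have m3 : ∀ i, Measurable fun u =>
            a i * (ENNReal.ofReal (((1 / 2) ^ i) ^ n) * (P i u * g i ‖u‖)) :=
          fun i => (m2 i).const_mul _
        rw [lintegral_const_mul _ (Measurable.tsum m3),
          lintegral_tsum fun i => (m3 i).aemeasurable]
        congr 1
        refine tsum_congr fun i => ?_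
        rw [lintegral_const_mul _ (m2 i), lintegral_const_mul _ (m1 i)]
    _ ≤ C1 * ∑' i, C2 * (if 1 - 2 * (1 / 2) ^ i ≤ ‖z‖ then v i ^ (-ε) else 0) := by
        refine mul_le_mul_right (ENNReal.tsum_le_tsum fun i => ?_) _
        have h2 := poisson_radial hn hω hz1.le (dy_mem i).1 (dy_mem i).2 (hgm i)
        rw [sub_sub_cancel] at h2
        have hp : (0 : ℝ) < ((1 / 2) ^ i) ^ n := by positivity
        have h3 : ENNReal.ofReal (((1 / 2) ^ i) ^ n) * ∫⁻ u, P i u * g i ‖u‖ ∂(wV n ω)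
            ≤ C2 * v i ^ (1 - ε) := by
          refine le_trans (mul_le_mul_right h2 _) ?_
          rw [← mul_assoc, ← ENNReal.ofReal_mul hp.le, mul_inv_cancel₀ hp.ne', ENNReal.ofReal_one,
            one_mul]
          exact htail i
        refine (mul_le_mul_right h3 _).trans_eq ?_
        simp only [ha]
        split_ifs
        · rw [sub_eq_neg_add, ENNReal.rpow_add _ _ (hv0 _) (hvt _), ENNReal.rpow_one]
          calc _ = C2 * v i ^ (-ε) * ((v i)⁻¹ * v i) := by ring
            _ = _ := by rw [ENNReal.inv_mul_cancel (hv0 _) (hvt _), mul_one]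
        · simp
    _ ≤ C1 * (C2 * (C3 * whE ω ‖z‖ ^ (-ε))) := by
        rw [ENNReal.tsum_mul_left]
        gcongr
        exact hsum _ (norm_nonneg z) hz1
    _ = _ := by ring

/-! ### Schur's test -/

/-- Schur's test for a symmetric non-negative kernel, with test function `h`. -/
lemma schur_test {X : Type*} [MeasurableSpace X] {μ : Measure X} [SFinite μ] {q q' : ℝ}
    (hq : q.HolderConjugate q') {K : X → X → ENNReal} (hK : Measurable (Function.uncurry K))
    (hsymm : ∀ x y, K x y = K y x) {h : X → ENNReal} (hh : Measurable h)
    (hh0 : ∀ᵐ x ∂μ, h x ≠ 0 ∧ h x ≠ ⊤) {C1 C2 : ENNReal}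
    (h1 : ∀ᵐ x ∂μ, ∫⁻ y, K x y * h y ^ q' ∂μ ≤ C1 * h x ^ q')
    (h2 : ∀ᵐ x ∂μ, ∫⁻ y, K x y * h y ^ q ∂μ ≤ C2 * h x ^ q)
    {g : X → ENNReal} (hg : Measurable g) :
    ∫⁻ x, (∫⁻ y, K x y * g y ∂μ) ^ q ∂μ ≤ C1 ^ (q / q') * C2 * ∫⁻ y, g y ^ q ∂μ := by
  have hq0 := hq.pos
  have hq0' := hq.symm.pos
  have hKx : ∀ x, Measurable (K x) := fun x => hK.comp measurable_prodMk_left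
  have hstep : ∀ᵐ x ∂μ, (∫⁻ y, K x y * g y ∂μ) ^ q
      ≤ C1 ^ (q / q') * ∫⁻ y, K x y * (h x ^ q * (g y ^ q * h y ^ (-q))) ∂μ := by
    filter_upwards [h1, hh0] with x hx hx0
    have e1 : ∫⁻ y, K x y * g y ∂μ
        ≤ ∫⁻ y, ((fun y => K x y ^ (1 / q') * h y) * (fun y => K x y ^ (1 / q) * (g y * (h y)⁻¹))) y ∂μ := by
      refine lintegral_mono_ae ?_
      filter_upwards [hh0] with y hy
      refine le_of_eq ?_
      rw [Pi.mul_apply]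
      calc K x y * g y = K x y ^ (1 / q' + 1 / q) * g y * (h y * (h y)⁻¹) := by
            rw [one_div, one_div, hq.symm.inv_add_inv_eq_one, ENNReal.rpow_one,
              ENNReal.mul_inv_cancel hy.1 hy.2, mul_one]
        _ = _ := by
            rw [ENNReal.rpow_add_of_nonneg _ _ (by positivity) (by positivity)]; ring
    have e2 := ENNReal.lintegral_mul_le_Lp_mul_Lq μ hq.symm
      (f := fun y => K x y ^ (1 / q') * h y) (g := fun y => K x y ^ (1 / q) * (g y * (h y)⁻¹))
      (((hKx x).pow_const _).mul hh).aemeasurable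
      (((hKx x).pow_const _).mul (hg.mul hh.inv)).aemeasurable
    have e3 : ∀ y, (K x y ^ (1 / q') * h y) ^ q' = K x y * h y ^ q' := fun y => by
      rw [ENNReal.mul_rpow_of_nonneg _ _ hq0'.le, ← ENNReal.rpow_mul,
        one_div_mul_cancel hq0'.ne', ENNReal.rpow_one]
    have e4 : ∀ y, (K x y ^ (1 / q) * (g y * (h y)⁻¹)) ^ q = K x y * (g y ^ q * h y ^ (-q)) :=
      fun y => by
        rw [ENNReal.mul_rpow_of_nonneg _ _ hq0.le, ← ENNReal.rpow_mul,
          one_div_mul_cancel hq0.ne', ENNReal.rpow_one, ENNReal.mul_rpow_of_nonneg _ _ hq0.le,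
          ENNReal.rpow_neg, ENNReal.inv_rpow]
    simp only [e3, e4] at e2
    calc (∫⁻ y, K x y * g y ∂μ) ^ q
        ≤ ((∫⁻ y, K x y * h y ^ q' ∂μ) ^ (1 / q') *
            (∫⁻ y, K x y * (g y ^ q * h y ^ (-q)) ∂μ) ^ (1 / q)) ^ q :=
          ENNReal.rpow_le_rpow (e1.trans e2) hq0.le
      _ = (∫⁻ y, K x y * h y ^ q' ∂μ) ^ (q / q') *
            ∫⁻ y, K x y * (g y ^ q * h y ^ (-q)) ∂μ := by
          rw [ENNReal.mul_rpow_of_nonneg _ _ hq0.le, ← ENNReal.rpow_mul, ← ENNReal.rpow_mul,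
            one_div_mul_cancel hq0.ne', ENNReal.rpow_one, one_div_mul_eq_div]
      _ ≤ (C1 * h x ^ q') ^ (q / q') * ∫⁻ y, K x y * (g y ^ q * h y ^ (-q)) ∂μ := by
          gcongr
      _ = _ := by
          have m1 : Measurable fun y => K x y * (g y ^ q * h y ^ (-q)) :=
            (hKx x).mul ((hg.pow_const _).mul (hh.pow_const _))
          rw [ENNReal.mul_rpow_of_nonneg _ _ (by positivity), ← ENNReal.rpow_mul,
            mul_div_cancel₀ q hq0'.ne', mul_assoc, ← lintegral_const_mul _ m1]
          congr 2
          ext y; ring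
  have hmeas : Measurable (Function.uncurry fun x y =>
      K x y * (h x ^ q * (g y ^ q * h y ^ (-q)))) :=
    hK.mul (((hh.comp measurable_fst).pow_const _).mul
      (((hg.comp measurable_snd).pow_const _).mul ((hh.comp measurable_snd).pow_const _)))
  calc _ ≤ ∫⁻ x, C1 ^ (q / q') * ∫⁻ y, K x y * (h x ^ q * (g y ^ q * h y ^ (-q))) ∂μ ∂μ :=
        lintegral_mono_ae hstep
    _ = C1 ^ (q / q') * ∫⁻ y, ∫⁻ x, K x y * (h x ^ q * (g y ^ q * h y ^ (-q))) ∂μ ∂μ := by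
        rw [lintegral_const_mul _ hmeas.lintegral_prod_right, lintegral_lintegral_swap hmeas.aemeasurable]
    _ ≤ C1 ^ (q / q') * ∫⁻ y, C2 * g y ^ q ∂μ := by
        refine mul_le_mul_right (lintegral_mono_ae ?_) _
        filter_upwards [h2, hh0] with y hy hy0
        calc ∫⁻ x, K x y * (h x ^ q * (g y ^ q * h y ^ (-q))) ∂μ
            = (∫⁻ x, K y x * h x ^ q ∂μ) * (g y ^ q * h y ^ (-q)) := by
              have m1 : Measurable fun x => K y x * h x ^ q := (hKx y).mul (hh.pow_const _)
              rw [← lintegral_mul_const _ m1]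
              refine lintegral_congr fun x => ?_
              rw [hsymm x y, mul_assoc]
          _ ≤ C2 * h y ^ q * (g y ^ q * h y ^ (-q)) := by gcongr
          _ = C2 * g y ^ q * (h y ^ q * h y ^ (-q)) := by ring
          _ = _ := by
              rw [← ENNReal.rpow_add _ _ hy0.1 hy0.2, add_neg_cancel, ENNReal.rpow_zero, mul_one]
    _ = _ := by rw [lintegral_const_mul _ (hg.pow_const _), mul_assoc]

/-! ### Boundedness of the positive operator on `L^q_ω` -/

/-- The modulus of the reproducing kernel, set to zero off `𝔹 × 𝔹` to make it measurable. -/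
def absKer (n : ℕ) (ω : ℝ → ℝ) (z u : En n) : ENNReal :=
  (Bl n ×ˢ Bl n).indicator (fun p => ENNReal.ofReal ‖kerF n ω (inner ℂ p.1 p.2)‖) (z, u)

lemma absKer_of_mem {n : ℕ} {ω : ℝ → ℝ} {z u : En n} (hz : z ∈ Bl n) (hu : u ∈ Bl n) :
    absKer n ω z u = ENNReal.ofReal ‖kerF n ω (inner ℂ z u)‖ :=
  Set.indicator_of_mem (show (z, u) ∈ Bl n ×ˢ Bl n from ⟨hz, hu⟩) _

lemma absKer_symm (n : ℕ) (ω : ℝ → ℝ) (z u : En n) : absKer n ω z u = absKer n ω u z := by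
  by_cases h : z ∈ Bl n ∧ u ∈ Bl n
  · rw [absKer_of_mem h.1 h.2, absKer_of_mem h.2 h.1, ← inner_conj_symm u z, kerF_conj,
      RCLike.norm_conj]
  · rw [absKer, absKer, Set.indicator_of_notMem (by simpa using h),
      Set.indicator_of_notMem (by simpa [and_comm] using h)]

lemma measurable_absKer {n : ℕ} (hn : 1 ≤ n) {ω : ℝ → ℝ} (hω : IsWeight ω) (hD : DHat ω)
    (hpos : ∀ r ∈ Set.Ico (0:ℝ) 1, 0 < wh ω r) : Measurable (Function.uncurry (absKer n ω)) := by
  have hcont : ContinuousOn (fun p : En n × En n =>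
      ENNReal.ofReal ‖kerF n ω (inner ℂ p.1 p.2)‖) (Bl n ×ˢ Bl n) := by
    refine ENNReal.continuous_ofReal.comp_continuousOn (continuous_norm.comp_continuousOn ?_)
    refine (kerF_continuousOn hn hω hD hpos).comp
      (Continuous.continuousOn (f := fun p : En n × En n => (inner ℂ p.1 p.2 : ℂ)) (by fun_prop)) ?_
    rintro ⟨z, u⟩ ⟨hz, hu⟩
    have hz1 : ‖z‖ < 1 := by simpa [Bl] using hz
    simpa using norm_inner_lt hz1.le hu
  have hms : MeasurableSet (Bl n ×ˢ Bl n) :=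
    (isOpen_ball.measurableSet).prod isOpen_ball.measurableSet
  classical
  have := hcont.measurable_piecewise (g := 0) continuousOn_const hms
  have e : Function.uncurry (absKer n ω) = (Bl n ×ˢ Bl n).indicator
      (fun p => ENNReal.ofReal ‖kerF n ω (inner ℂ p.1 p.2)‖) := by
    ext ⟨z, u⟩; rfl
  rw [e, ← Set.piecewise_eq_indicator]
  exact this

/-- The positive operator with kernel `|B^ω_z(u)|` is bounded on `L^q_ω` for `q > 1`. -/
lemma absKer_bounded {n : ℕ} (hn : 1 ≤ n) {ω : ℝ → ℝ} (hω : IsWeight ω) (hD : DD ω)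
    (hpos : ∀ r ∈ Set.Ico (0:ℝ) 1, 0 < wh ω r) {q : ℝ} (hq : 1 < q) :
    ∃ C : ENNReal, C ≠ ⊤ ∧ ∀ g : En n → ENNReal, Measurable g →
      ∫⁻ z, (∫⁻ u, absKer n ω z u * g u ∂(wV n ω)) ^ q ∂(wV n ω)
        ≤ C * ∫⁻ u, g u ^ q ∂(wV n ω) := by
  have := isFinite_wV hn hω
  set q' : ℝ := q.conjExponent with hq'
  have hc : q.HolderConjugate q' := Real.HolderConjugate.conjExponent hq
  have hq0 := hc.pos
  have hq0' := hc.symm.pos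
  obtain ⟨C1, hC1, h1⟩ := kerF_schur hn hω hD hpos (ε := 1 / q) (by positivity)
    ((div_lt_one hq0).2 hq)
  obtain ⟨C2, hC2, h2⟩ := kerF_schur hn hω hD hpos (ε := 1 / q') (by positivity)
    ((div_lt_one hq0').2 hc.symm.lt)
  have hw : ∀ ε : ℝ, ∀ z ∈ Bl n, ∫⁻ u, absKer n ω z u * whE ω ‖u‖ ^ (-ε) ∂(wV n ω)
      = ∫⁻ u, ENNReal.ofReal ‖kerF n ω (inner ℂ z u)‖ * whE ω ‖u‖ ^ (-ε) ∂(wV n ω) := by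
    intro ε z hz
    refine lintegral_congr_ae ?_
    filter_upwards [ae_wV n ω] with u hu
    rw [absKer_of_mem hz hu]
  have e1 : ∀ x : ENNReal, (x ^ (-(1 / (q * q')))) ^ q' = x ^ (-(1 / q)) := fun x => by
    rw [← ENNReal.rpow_mul]; congr 1; field_simp
  have e2 : ∀ x : ENNReal, (x ^ (-(1 / (q * q')))) ^ q = x ^ (-(1 / q')) := fun x => by
    rw [← ENNReal.rpow_mul]; congr 1; field_simp
  refine ⟨C1 ^ (q / q') * C2, ENNReal.mul_ne_top
    (ENNReal.rpow_ne_top_of_nonneg (by positivity) hC1) hC2, fun g hg => ?_⟩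
  refine schur_test hc (measurable_absKer hn hω hD.1 hpos) (absKer_symm n ω)
    (h := fun u => whE ω ‖u‖ ^ (-(1 / (q * q'))))
    (((measurable_whE hω).comp measurable_norm).pow_const _) ?_ ?_ ?_ hg
  · filter_upwards [ae_wV n ω] with u hu
    have hu1 : ‖u‖ < 1 := by simpa [Bl] using hu
    have h3 := hpos ‖u‖ ⟨norm_nonneg u, hu1⟩
    have h4 : whE ω ‖u‖ ≠ 0 := by simpa [whE, max_eq_left (norm_nonneg u)] using h3
    have h5 : whE ω ‖u‖ ≠ ⊤ := ENNReal.ofReal_ne_top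
    exact ⟨(ENNReal.rpow_pos (pos_iff_ne_zero.2 h4) h5).ne', ENNReal.rpow_ne_top_of_ne_zero h4 h5⟩
  · filter_upwards [ae_wV n ω] with z hz
    simp only [e1]
    rw [hw _ z hz]
    exact h1 z hz
  · filter_upwards [ae_wV n ω] with z hz
    simp only [e2]
    rw [hw _ z hz]
    exact h2 z hz

theorem stmt_11 (n : ℕ) (hn : 1 ≤ n) (p q : ℝ) (hp : 1 < p) (hpq : p ≤ q)
    (ω : ℝ → ℝ) (hω : IsWeight ω) (hD : DD ω)
    (hpos : ∀ r ∈ Set.Ico (0:ℝ) 1, 0 < wh ω r)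
    (B : En n → En n → ℂ) (hB : IsRepKernel n ω B) :
    ∃ C : ℝ, 0 < C ∧ ∀ f : En n → ℂ, Measurable f →
      (∫⁻ z in Bl n,
          (∫⁻ u in Bl n, ENNReal.ofReal
              (‖f u‖ * ‖B z u‖ * (1 - ‖u‖) ^ ((1/p - 1/q) * ((n : ℝ) + 1)) *
                (ω ‖u‖) ^ (1 + 1/p - 1/q)) ∂(nV n)) ^ q
            * ENNReal.ofReal (ω ‖z‖) ∂(nV n))
        ≤ ENNReal.ofReal C *
          (∫⁻ u in Bl n, ENNReal.ofReal
            (‖f u‖ ^ q * (1 - ‖u‖) ^ ((q/p - 1) * ((n : ℝ) + 1)) *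
              (ω ‖u‖) ^ (q/p)) ∂(nV n)) := by
  have hq : 1 < q := hp.trans_le hpq
  have hp0 : 0 < p := by linarith
  have hq0 : 0 < q := by linarith
  have hb : 0 ≤ 1 / p - 1 / q := sub_nonneg.2 (one_div_le_one_div_of_le hp0 hpq)
  obtain ⟨C, hC, hbd⟩ := absKer_bounded hn hω hD hpos hq
  refine ⟨C.toReal + 1, by positivity, fun f hf => ?_⟩
  have := isFinite_wV hn hω
  have hωm := hω.2.1
  have hms : MeasurableSet (Bl n) := isOpen_ball.measurableSet
  set b : ℝ := 1 / p - 1 / q with hbdef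
  -- with this `g`, the claim is the boundedness of the positive operator on `L^q_ω`
  set g : En n → ENNReal := fun u =>
    ENNReal.ofReal (‖f u‖ * (1 - ‖u‖) ^ (b * ((n : ℝ) + 1)) * ω ‖u‖ ^ b) with hg
  have hgm : Measurable g := by
    have h1 : Measurable fun u : En n => ‖u‖ := measurable_norm
    exact ((hf.norm.mul ((h1.const_sub 1).pow_const _)).mul
      ((hωm.comp h1).pow_const _)).ennreal_ofReal
  have hKm := measurable_absKer hn hω hD.1 hpos
  have hKg : Measurable (Function.uncurry fun z u => absKer n ω z u * g u) :=
    hKm.mul (hgm.comp measurable_snd)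
  have hω0 : ∀ u ∈ Bl n, 0 ≤ ω ‖u‖ := fun u hu =>
    hω.1 _ ⟨norm_nonneg u, by simpa [Bl] using hu⟩
  have hu0 : ∀ u ∈ Bl n, 0 < 1 - ‖u‖ := fun u hu => by
    have : ‖u‖ < 1 := by simpa [Bl] using hu
    linarith
  have hinner : ∀ z ∈ Bl n, ∫⁻ u in Bl n, ENNReal.ofReal
      (‖f u‖ * ‖B z u‖ * (1 - ‖u‖) ^ (b * ((n : ℝ) + 1)) * (ω ‖u‖) ^ (1 + 1/p - 1/q)) ∂(nV n)
      = ∫⁻ u, absKer n ω z u * g u ∂(wV n ω) := by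
    intro z hz
    have m1 : Measurable fun u => absKer n ω z u * g u :=
      (Measurable.of_uncurry_left hKm).mul hgm
    rw [lintegral_wV hω m1]
    refine setLIntegral_congr_fun hms fun u hu => ?_
    have h1 := hω0 u hu
    have h2 := hu0 u hu
    change _ = ENNReal.ofReal (ω ‖u‖) * (absKer n ω z u * g u)
    rw [absKer_of_mem hz hu, ← norm_kernel hn hω hD.1 hpos hB hz hu, hg,
      ← ENNReal.ofReal_mul (norm_nonneg _), ← ENNReal.ofReal_mul h1,
      show 1 + 1 / p - 1 / q = 1 + b by rw [hbdef]; ring,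
      Real.rpow_add_of_nonneg h1 zero_le_one hb, Real.rpow_one]
    congr 1
    ring
  have hleft : (∫⁻ z in Bl n, (∫⁻ u in Bl n, ENNReal.ofReal
      (‖f u‖ * ‖B z u‖ * (1 - ‖u‖) ^ (b * ((n : ℝ) + 1)) *
        (ω ‖u‖) ^ (1 + 1/p - 1/q)) ∂(nV n)) ^ q * ENNReal.ofReal (ω ‖z‖) ∂(nV n))
      = ∫⁻ z, (∫⁻ u, absKer n ω z u * g u ∂(wV n ω)) ^ q ∂(wV n ω) := by
    have m1 : Measurable fun z => (∫⁻ u, absKer n ω z u * g u ∂(wV n ω)) ^ q :=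
      hKg.lintegral_prod_right.pow_const q
    rw [lintegral_wV hω m1]
    refine setLIntegral_congr_fun hms fun z hz => ?_
    rw [← hinner z hz, mul_comm]
  have hright : ∫⁻ u, g u ^ q ∂(wV n ω) = ∫⁻ u in Bl n, ENNReal.ofReal
      (‖f u‖ ^ q * (1 - ‖u‖) ^ ((q/p - 1) * ((n : ℝ) + 1)) * (ω ‖u‖) ^ (q/p)) ∂(nV n) := by
    have m1 : Measurable fun u => g u ^ q := hgm.pow_const q
    rw [lintegral_wV hω m1]
    refine setLIntegral_congr_fun hms fun u hu => ?_
    have h1 := hω0 u hu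
    have h2 := hu0 u hu
    have h3 : 0 ≤ (1 - ‖u‖) ^ (b * ((n : ℝ) + 1)) := Real.rpow_nonneg h2.le _
    have h4 : 0 ≤ ω ‖u‖ ^ b := Real.rpow_nonneg h1 _
    change ENNReal.ofReal (ω ‖u‖) * g u ^ q = _
    rw [hg, ENNReal.ofReal_rpow_of_nonneg (by positivity) hq0.le, ← ENNReal.ofReal_mul h1,
      Real.mul_rpow (by positivity) h4, Real.mul_rpow (norm_nonneg _) h3, ← Real.rpow_mul h2.le,
      ← Real.rpow_mul h1, show b * ((n : ℝ) + 1) * q = (q / p - 1) * ((n : ℝ) + 1) by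
        rw [hbdef]; field_simp, show q / p = 1 + b * q by rw [hbdef]; field_simp; ring,
      Real.rpow_add_of_nonneg h1 zero_le_one (by positivity), Real.rpow_one]
    congr 1
    ring
  rw [hleft, ← hright]
  refine (hbd g hgm).trans ?_
  gcongr
  calc C = ENNReal.ofReal C.toReal := (ENNReal.ofReal_toReal hC).symm
    _ ≤ _ := ENNReal.ofReal_le_ofReal (by linarith)
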